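/- arXiv:2510.17344 — 7 statements merged into one kernel-verified Lean document; each statement's English description precedes it below -/
import Mathlib

section
/- Let H be a graph on n vertices and let S, T ⊆ V(H) with |S| = |T| = k. If T is reachable from S by some transformation sequence in the discovery token sliding model, then T is reachable from S by a transformation sequence of at most k·n token slides. -/
namespace TokenDiscovery

variable {V : Type*} {α : Type*}

/-- One token slide in the discovery token sliding model: exactly one token
moves from its current vertex to an adjacent vertex (several tokens may share
a vertex during the transformation).  A configuration assigns to every token
(indexed by `α`) its current vertex. -/
def Step (G : SimpleGraph V) (c c' : α → V) : Prop :=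
  ∃ i : α, G.Adj (c i) (c' i) ∧ ∀ j : α, j ≠ i → c' j = c j

/-- `T` is reachable from the initial configuration `c₀` within at most `b`
token slides in the discovery token sliding model: some transformation
sequence of at most `b` token slides moves the tokens from `c₀` to a
configuration with exactly one token on each vertex of `T`. -/
def Reachable (G : SimpleGraph V) (c₀ : α → V) (T : Set V) (b : ℕ) : Prop :=
  ∃ (m : ℕ) (f : ℕ → α → V), m ≤ b ∧ f 0 = c₀ ∧
    (∀ i : ℕ, i < m → Step G (f i) (f (i + 1))) ∧
    Function.Injective (f m) ∧ Set.range (f m) = T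

/-- `T` is reachable from `c₀` within at most `b` token slides in the
(plain) token sliding model: at every moment the tokens occupy pairwise
distinct vertices, and each token slide moves one token along an edge
(necessarily to an unoccupied vertex, since configurations stay injective). -/
def SlidingReachable (G : SimpleGraph V) (c₀ : α → V) (T : Set V) (b : ℕ) : Prop :=
  ∃ (m : ℕ) (f : ℕ → α → V), m ≤ b ∧ f 0 = c₀ ∧
    (∀ i : ℕ, i ≤ m → Function.Injective (f i)) ∧
    (∀ i : ℕ, i < m → Step G (f i) (f (i + 1))) ∧
    Set.range (f m) = T

end TokenDiscovery

/-!
Transformation sequences are walks in the graph of all configurations, with single slides as edges.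
A transformation sequence moves each token within its connected component. Conversely, since tokens
may share vertices, they can be routed to their final vertices one after another, each along a
shortest path. A shortest path in a graph with `n` vertices has fewer than `n` edges, so `k` tokens
need at most `k * n` slides.
-/

namespace TokenDiscovery

section Graph

variable {V W : Type*} {G : SimpleGraph V} {u v : V}

theorem edist_le_of_forall_adj_succ {f : ℕ → V} {m : ℕ}
    (hf : ∀ i < m, G.Adj (f i) (f (i + 1))) : G.edist (f 0) (f m) ≤ m := by
  induction m with
  | zero => simp
  | succ m ih =>
    have last_edge : G.edist (f m) (f (m + 1)) = 1 :=
      SimpleGraph.edist_eq_one_iff_adj.mpr (hf m m.lt_succ_self)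
    calc G.edist (f 0) (f (m + 1))
        ≤ G.edist (f 0) (f m) + G.edist (f m) (f (m + 1)) := SimpleGraph.edist_triangle
      _ ≤ m + 1 := add_le_add (ih fun i hi => hf i (hi.trans m.lt_succ_self)) last_edge.le
      _ = (m + 1 : ℕ) := (Nat.cast_succ m).symm

theorem edist_le_natCast_iff_exists_seq {b : ℕ} :
    G.edist u v ≤ b ↔ ∃ (m : ℕ) (f : ℕ → V),
      m ≤ b ∧ f 0 = u ∧ (∀ i < m, G.Adj (f i) (f (i + 1))) ∧ f m = v := by
  constructor
  · intro h
    obtain ⟨w, hw⟩ := SimpleGraph.exists_walk_of_edist_ne_top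
      (ne_top_of_le_ne_top (ENat.natCast_ne_top b) h)
    exact ⟨w.length, w.getVert, by exact_mod_cast hw.trans_le h, w.getVert_zero,
      fun _ hi => w.adj_getVert_succ hi, w.getVert_length⟩
  · rintro ⟨m, f, hm, rfl, hf, rfl⟩
    exact (edist_le_of_forall_adj_succ hf).trans (by exact_mod_cast hm)

theorem edist_hom_apply_le {G' : SimpleGraph W} (φ : G →g G') (u v : V) :
    G'.edist (φ u) (φ v) ≤ G.edist u v :=
  le_iInf fun w => (SimpleGraph.edist_le (w.map φ)).trans_eq (by rw [SimpleGraph.Walk.length_map])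

theorem dist_lt_card_of_reachable [Fintype V] (h : G.Reachable u v) :
    G.dist u v < Fintype.card V := by
  obtain ⟨p, hp, hlen⟩ := h.exists_path_of_dist
  exact hlen ▸ hp.length_lt

end Graph

variable {V α : Type*} {G : SimpleGraph V} {c d : α → V}

/-- The configuration graph of `G` for tokens indexed by `α`: two configurations are adjacent when
they differ by a single token slide, so that its walks are the transformation sequences. -/
def configGraph (G : SimpleGraph V) (α : Type*) : SimpleGraph (α → V) where
  Adj := Step G
  symm := ⟨fun _ _ ⟨i, hadj, hfix⟩ => ⟨i, hadj.symm, fun j hj => (hfix j hj).symm⟩⟩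
  loopless := ⟨fun _ ⟨_, hadj, _⟩ => hadj.ne rfl⟩

/-- The copy of `G` in its configuration graph obtained by letting the token `i` range over all
vertices while the other tokens stay as in `c`. -/
def moveTokenHom [DecidableEq α] (G : SimpleGraph V) (c : α → V) (i : α) :
    G →g configGraph G α where
  toFun := Function.update c i
  map_rel' hadj := ⟨i, by simpa only [Function.update_self] using hadj,
    fun j hj => by simp only [Function.update_of_ne hj]⟩

theorem moveTokenHom_apply [DecidableEq α] (c : α → V) (i : α) (v : V) :
    moveTokenHom G c i v = Function.update c i v :=
  rfl

theorem reachable_iff_exists_edist_le {T : Set V} {b : ℕ} :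
    Reachable G c T b ↔
      ∃ d, (configGraph G α).edist c d ≤ b ∧ Function.Injective d ∧ Set.range d = T := by
  constructor
  · rintro ⟨m, f, hm, h0, hstep, hinj, hrange⟩
    exact ⟨f m, edist_le_natCast_iff_exists_seq.mpr ⟨m, f, hm, h0, hstep, rfl⟩, hinj, hrange⟩
  · rintro ⟨d, hd, hinj, hrange⟩
    obtain ⟨m, f, hm, h0, hstep, rfl⟩ := edist_le_natCast_iff_exists_seq.mp hd
    exact ⟨m, f, hm, h0, hstep, hinj, hrange⟩

theorem Step.reachable_apply (h : Step G c d) (i : α) : G.Reachable (c i) (d i) := by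
  obtain ⟨j, hadj, hfix⟩ := h
  obtain rfl | hij := eq_or_ne i j
  · exact hadj.reachable
  · rw [hfix i hij]

theorem reachable_apply_of_configGraph_reachable (h : (configGraph G α).Reachable c d) (i : α) :
    G.Reachable (c i) (d i) := by
  obtain ⟨w⟩ := h
  induction w with
  | nil => rfl
  | cons hstep _ ih => exact (Step.reachable_apply hstep i).trans ih

theorem edist_update_le [DecidableEq α] (c : α → V) (i : α) (v : V) :
    (configGraph G α).edist c (Function.update c i v) ≤ G.edist (c i) v := by
  simpa only [moveTokenHom_apply, Function.update_eq_self] using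
    edist_hom_apply_le (moveTokenHom G c i) (c i) v

theorem edist_piecewise_le_sum [DecidableEq α] (c d : α → V) (s : Finset α) :
    (configGraph G α).edist c (s.piecewise d c) ≤ ∑ i ∈ s, G.edist (c i) (d i) := by
  induction s using Finset.induction_on with
  | empty => simp
  | insert i s hi ih =>
    have move_last : (configGraph G α).edist (s.piecewise d c) ((insert i s).piecewise d c) ≤
        G.edist (c i) (d i) := by
      simpa only [Finset.piecewise_insert, Finset.piecewise_eq_of_notMem _ _ _ hi] using
        edist_update_le (s.piecewise d c) i (d i)
    calc (configGraph G α).edist c ((insert i s).piecewise d c)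
        ≤ (configGraph G α).edist c (s.piecewise d c) +
            (configGraph G α).edist (s.piecewise d c) ((insert i s).piecewise d c) :=
          SimpleGraph.edist_triangle
      _ ≤ ∑ j ∈ s, G.edist (c j) (d j) + G.edist (c i) (d i) := add_le_add ih move_last
      _ = ∑ j ∈ insert i s, G.edist (c j) (d j) := by rw [Finset.sum_insert hi, add_comm]

theorem configGraph_edist_le_sum [Fintype α] (c d : α → V) :
    (configGraph G α).edist c d ≤ ∑ i, G.edist (c i) (d i) := by
  classical
  simpa only [Finset.piecewise_univ] using edist_piecewise_le_sum c d Finset.univ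

end TokenDiscovery

theorem discovery_reachable_within_kn_general {V α : Type*} [Fintype α] (H : SimpleGraph V)
    (n : ℕ) (hn : ∀ u v, H.Reachable u v → H.dist u v ≤ n) (c : α → V) (T : Set V)
    (h : ∃ b : ℕ, TokenDiscovery.Reachable H c T b) :
    TokenDiscovery.Reachable H c T (Fintype.card α * n) := by
  obtain ⟨b, h⟩ := h
  obtain ⟨d, hd, hinj, hrange⟩ := TokenDiscovery.reachable_iff_exists_edist_le.mp h
  have hcd : (TokenDiscovery.configGraph H α).Reachable c d :=
    SimpleGraph.reachable_of_edist_ne_top (ne_top_of_le_ne_top (ENat.natCast_ne_top b) hd)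
  have token_edist_le (i : α) : H.edist (c i) (d i) ≤ n := by
    have hi := TokenDiscovery.reachable_apply_of_configGraph_reachable hcd i
    rw [← hi.coe_dist_eq_edist]
    exact_mod_cast hn _ _ hi
  refine TokenDiscovery.reachable_iff_exists_edist_le.mpr ⟨d, ?_, hinj, hrange⟩
  calc (TokenDiscovery.configGraph H α).edist c d
      ≤ ∑ i, H.edist (c i) (d i) := TokenDiscovery.configGraph_edist_le_sum c d
    _ ≤ ∑ _i : α, (n : ℕ∞) := Finset.sum_le_sum fun i _ => token_edist_le i
    _ = (Fintype.card α * n : ℕ) := by simp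

/-- If `T` is reachable from `S` by some transformation sequence in the
discovery token sliding model, then it is reachable by a transformation
sequence of at most `k · n` token slides, where `k = |S| = |T|` and `n` is the
number of vertices of `H`. -/
theorem discovery_reachable_within_kn {V : Type*} [Fintype V] (H : SimpleGraph V)
    (n k : ℕ) (hn : Fintype.card V = n)
    (S T : Finset V) (hS : S.card = k) (hT : T.card = k)
    (h : ∃ b : ℕ, TokenDiscovery.Reachable H (fun a : {x // x ∈ S} => (a : V)) (↑T) b) :
    TokenDiscovery.Reachable H (fun a : {x // x ∈ S} => (a : V)) (↑T) (k * n) := by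
  rw [← hS, ← Fintype.card_coe S, ← hn]
  exact discovery_reachable_within_kn_general H _
    (fun _ _ huv => (TokenDiscovery.dist_lt_card_of_reachable huv).le) _ _ h
end

section
/- Let H be a graph, let S, T ⊆ V(H) with |S| = |T| = k, and let b ∈ ℕ. Then T is reachable from S within b token slides in the discovery token sliding model if and only if T is reachable from S within b token slides in the token sliding model, in which at every moment the tokens occupy pairwise distinct vertices and a token may only slide along an edge to an unoccupied vertex. -/
/-!
A discovery sequence decomposes into one walk per token, whose lengths add up to the number of
slides. Conversely, suppose that distinct targets are joined to distinct starting vertices by walks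
of total length `n`. If some target is unoccupied, the walk of its token leaves the set of occupied
vertices along an edge from some token `i` to a free vertex. Slide token `i` along that edge and let
the two tokens exchange their targets: token `i` follows the rest of the walk, and the other token
follows the walk up to the old position of `i` and then the old walk of `i`. This uses one slide and
shortens the total length by one. If every target is occupied, then the targets are
already reached: only finitely many tokens are off target, so counting these leaves no other
occupied vertex.
-/

namespace TokenDiscovery

variable {V α : Type*} {G : SimpleGraph V} {c c' σ : α → V} {n : ℕ}

theorem exists_walk_boundary_split {u v : V} (p : G.Walk u v) {s : Set V} (hu : u ∈ s)
    (hv : v ∉ s) : ∃ x ∈ s, ∃ y ∉ s, ∃ (q : G.Walk u x) (r : G.Walk y v),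
      G.Adj x y ∧ p.length = q.length + r.length + 1 := by
  obtain ⟨⟨⟨x, y⟩, hadj⟩, hdart, hx, hy⟩ := p.exists_boundary_dart s hu hv
  obtain ⟨q, r, rfl⟩ := (p.isSubwalk_toWalk_iff_mem_darts hadj).mpr hdart
  refine ⟨x, hx, y, hy, q, r, hadj, ?_⟩
  simp only [SimpleGraph.Walk.length_append, SimpleGraph.Walk.length_cons,
    SimpleGraph.Walk.length_nil]
  lia

theorem range_eq_of_range_subset_of_finite_ne (hσ : Function.Injective σ)
    (hsub : Set.range σ ⊆ Set.range c) (hfin : {a | c a ≠ σ a}.Finite) :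
    Set.range σ = Set.range c := by
  set M := {a | c a ≠ σ a}
  have himage_sub : σ '' M ⊆ c '' M := by
    rintro _ ⟨a, ha, rfl⟩
    obtain ⟨b, hb⟩ := hsub ⟨a, rfl⟩
    refine ⟨b, fun hbσ => ha ?_, hb⟩
    rwa [← hσ (hbσ.symm.trans hb)]
  have himage : σ '' M = c '' M := by
    refine Set.eq_of_subset_of_ncard_le himage_sub ?_ (hfin.image c)
    rw [Set.ncard_image_of_injective M hσ]
    exact Set.ncard_image_le hfin
  refine hsub.antisymm ?_
  rintro _ ⟨a, rfl⟩
  by_cases ha : c a = σ a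
  · exact ⟨a, ha.symm⟩
  · exact Set.image_subset_range σ M (himage ▸ Set.mem_image_of_mem c ha)

theorem injective_update_of_notMem_range [DecidableEq α] (hc : Function.Injective c) {y : V}
    (hy : y ∉ Set.range c) (i : α) : Function.Injective (Function.update c i y) := by
  intro j k hjk
  grind [Function.update_apply]

theorem step_update [DecidableEq α] {i : α} {y : V} (hadj : G.Adj (c i) y) :
    Step G c (Function.update c i y) :=
  ⟨i, by simpa using hadj, fun _ hj => Function.update_of_ne hj y c⟩

/-- The tokens of `c` can be routed to the vertices `σ` along walks of total length at most `n`,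
ignoring collisions. The finitely supported `l` bounds the individual lengths, so that only finitely
many of possibly infinitely many tokens move. -/
def RoutableWithin (G : SimpleGraph V) (c σ : α → V) (n : ℕ) : Prop :=
  ∃ l : α →₀ ℕ, (∀ a, ∃ p : G.Walk (c a) (σ a), p.length ≤ l a) ∧ l.degree ≤ n

theorem RoutableWithin.refl (G : SimpleGraph V) (c : α → V) : RoutableWithin G c c 0 :=
  ⟨0, fun _ => ⟨.nil, le_rfl⟩, by simp⟩

theorem RoutableWithin.mono {m : ℕ} (h : RoutableWithin G c σ m) (hmn : m ≤ n) :
    RoutableWithin G c σ n :=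
  let ⟨l, hl, hdeg⟩ := h
  ⟨l, hl, hdeg.trans hmn⟩

theorem RoutableWithin.step (h : RoutableWithin G c c' n) (hstep : Step G c' σ) :
    RoutableWithin G c σ (n + 1) := by
  obtain ⟨l, hl, hdeg⟩ := h
  obtain ⟨i, hadj, hfix⟩ := hstep
  refine ⟨l + Finsupp.single i 1, fun a => ?_, by simpa using hdeg⟩
  obtain ⟨p, hp⟩ := hl a
  obtain rfl | hai := eq_or_ne a i
  · exact ⟨p.concat hadj, by simpa using hp⟩
  · exact ⟨p.copy rfl (hfix a hai).symm, by simpa [hai.symm] using hp⟩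

theorem RoutableWithin.of_steps {f : ℕ → α → V} {m : ℕ}
    (hstep : ∀ i < m, Step G (f i) (f (i + 1))) : RoutableWithin G (f 0) (f m) m := by
  induction m with
  | zero => exact .refl G (f 0)
  | succ m ih => exact (ih fun i hi => hstep i (by lia)).step (hstep m m.lt_succ_self)

theorem RoutableWithin.finite_ne (h : RoutableWithin G c σ n) : {a | c a ≠ σ a}.Finite := by
  obtain ⟨l, hl, -⟩ := h
  refine l.hasFiniteSupport.subset fun a hne hla => hne ?_
  obtain ⟨p, hp⟩ := hl a
  exact p.eq_of_length_eq_zero (Nat.le_zero.mp (hp.trans_eq hla))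

theorem RoutableWithin.exists_slide_swap [DecidableEq α] (h : RoutableWithin G c σ n) {a : α}
    (ha : σ a ∉ Set.range c) :
    ∃ i y k, y ∉ Set.range c ∧ G.Adj (c i) y ∧ n = k + 1 ∧
      RoutableWithin G (Function.update c i y) (σ ∘ Equiv.swap a i) k := by
  obtain ⟨l, hl, hdeg⟩ := h
  obtain ⟨p, hp⟩ := hl a
  obtain ⟨_, ⟨i, rfl⟩, y, hy, q, r, hadj, hlen⟩ :=
    exists_walk_boundary_split p (Set.mem_range_self a) ha
  obtain ⟨l', rfl⟩ := exists_add_of_le (Finsupp.single_le_iff.mpr (hlen ▸ hp))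
  have hdeg' : q.length + r.length + 1 + l'.degree ≤ n := by simpa using hdeg
  have hwalk : ∀ j ≠ a, ∃ w : G.Walk (c j) (σ j), w.length ≤ l' j := fun j hja => by
    simpa [hja.symm] using hl j
  -- `l'` is `l` without the length of `p`; the swap passes what `l` allotted to `i` on to `a`.
  refine ⟨i, y, n - 1, hy, hadj, by lia,
    .single a q.length + .single i r.length + l'.mapDomain (Equiv.swap a i), fun j => ?_, ?_⟩
  · simp only [Finsupp.add_apply, Finsupp.mapDomain_equiv_apply, Equiv.symm_swap]
    obtain rfl | hji := eq_or_ne j i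
    · refine ⟨r.copy (by simp) (by simp), ?_⟩
      rw [SimpleGraph.Walk.length_copy, Finsupp.single_eq_same]
      lia
    obtain rfl | hja := eq_or_ne j a
    · obtain ⟨w, hw⟩ := hwalk i hji.symm
      refine ⟨(q.append w).copy (by simp [hji]) (by simp), ?_⟩
      rw [SimpleGraph.Walk.length_copy, SimpleGraph.Walk.length_append, Finsupp.single_eq_same,
        Equiv.swap_apply_left]
      lia
    · obtain ⟨w, hw⟩ := hwalk j hja
      have hswap : Equiv.swap a i j = j := Equiv.swap_apply_of_ne_of_ne hja hji
      refine ⟨w.copy (by simp [hji]) (by simp [hswap]), ?_⟩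
      rw [SimpleGraph.Walk.length_copy, hswap]
      lia
  · simp only [map_add, Finsupp.degree_single, Finsupp.degree_mapDomain]
    lia

theorem slidingReachable_range (hc : Function.Injective c) (b : ℕ) :
    SlidingReachable G c (Set.range c) b :=
  ⟨0, fun _ => c, b.zero_le, rfl, fun _ _ => hc, by simp, rfl⟩

theorem SlidingReachable.cons {T : Set V} {b : ℕ} (hc : Function.Injective c) (hstep : Step G c c')
    (h : SlidingReachable G c' T b) : SlidingReachable G c T (b + 1) := by
  obtain ⟨m, f, hm, rfl, hinj, hsteps, hT⟩ := h
  refine ⟨m + 1, fun i => Nat.casesOn i c f, by lia, rfl, ?_, ?_, hT⟩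
  · rintro (_ | i) hi
    · exact hc
    · exact hinj i (by lia)
  · rintro (_ | i) hi
    · exact hstep
    · exact hsteps i (by lia)

theorem RoutableWithin.slidingReachable (h : RoutableWithin G c σ n) (hc : Function.Injective c)
    (hσ : Function.Injective σ) : SlidingReachable G c (Set.range σ) n := by
  classical
  induction n using Nat.strong_induction_on generalizing c σ with
  | _ n ih =>
    by_cases hsub : Set.range σ ⊆ Set.range c
    · rw [range_eq_of_range_subset_of_finite_ne hσ hsub h.finite_ne]
      exact slidingReachable_range hc n
    · obtain ⟨_, ⟨a, rfl⟩, ha⟩ := Set.not_subset.mp hsub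
      obtain ⟨i, y, k, hy, hadj, rfl, hroute⟩ := h.exists_slide_swap ha
      have hreach := ih k k.lt_succ_self hroute (injective_update_of_notMem_range hc hy i)
        (hσ.comp (Equiv.swap a i).injective)
      rw [(Equiv.swap a i).surjective.range_comp] at hreach
      exact hreach.cons hc (step_update hadj)

theorem Reachable.slidingReachable {T : Set V} {b : ℕ} (h : Reachable G c T b)
    (hc : Function.Injective c) : SlidingReachable G c T b := by
  obtain ⟨m, f, hm, rfl, hsteps, hinj, rfl⟩ := h
  exact ((RoutableWithin.of_steps hsteps).mono hm).slidingReachable hc hinj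

theorem SlidingReachable.reachable {T : Set V} {b : ℕ} (h : SlidingReachable G c T b) :
    Reachable G c T b :=
  let ⟨m, f, hm, h0, hinj, hsteps, hT⟩ := h
  ⟨m, f, hm, h0, hsteps, hinj m le_rfl, hT⟩

theorem discovery_reachable_iff_sliding_reachable_general (G : SimpleGraph V)
    (hc : Function.Injective c) (T : Set V) (b : ℕ) :
    Reachable G c T b ↔ SlidingReachable G c T b :=
  ⟨fun h => h.slidingReachable hc, SlidingReachable.reachable⟩

end TokenDiscovery

/-- `T` is reachable from `S` within `b` token slides in the discovery token
sliding model if and only if it is reachable from `S` within `b` token slides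
in the token sliding model (where at every moment the tokens occupy pairwise
distinct vertices and a token may only slide along an edge to an unoccupied
vertex). -/
theorem discovery_reachable_iff_sliding_reachable {V : Type*} (H : SimpleGraph V)
    (S T : Finset V) (k b : ℕ) (hS : S.card = k) (hT : T.card = k) :
    TokenDiscovery.Reachable H (fun a : {x // x ∈ S} => (a : V)) (↑T) b ↔
      TokenDiscovery.SlidingReachable H (fun a : {x // x ∈ S} => (a : V)) (↑T) b :=
  TokenDiscovery.discovery_reachable_iff_sliding_reachable_general H Subtype.val_injective T b
end

section
/- For the graph H of the stars construction obtained from a Multicolored Clique instance (G, κ), the modulator to stars number satisfies ms(H) ≤ 5·(κ choose 2) + κ; indeed, the set consisting of all green connector nodes, all gray edge block nodes, and all teal vertex block nodes is a modulator to stars of H. -/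
namespace StarsConstruction

/-- Pre-nodes of the stars construction obtained from a Multicolored Clique
instance with `κ` color classes of `n` vertices each.  The vertex `x` of class
`i` is the pair `(i, x) : Fin κ × Fin n`, and its index is `ι(i, x) = x + 1`. -/
inductive PreNode (κ n : ℕ) : Type
  /-- the teal vertex block node `b_i` -/
  | vblock (i : Fin κ)
  /-- the purple vertex root node of the star vertex-gadget for the vertex `(i, x)` -/
  | vroot (i : Fin κ) (x : Fin n)
  /-- the `p`-th leaf of the group for class `j` of the star vertex-gadget for `(i, x)` -/
  | vleaf (i : Fin κ) (x : Fin n) (j : Fin κ) (p : Fin n)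
  /-- the gray edge block node `b_{i,j}` (for `i < j`) -/
  | eblock (i j : Fin κ)
  /-- the black edge root node of the star edge-gadget for the edge `(i,x)(j,y)` -/
  | eroot (i j : Fin κ) (x y : Fin n)
  /-- the `p`-th leaf of the group for `(i, x)` (`side = false`) or `(j, y)`
  (`side = true`) of the star edge-gadget for the edge `(i,x)(j,y)` -/
  | eleaf (i j : Fin κ) (x y : Fin n) (side : Bool) (p : Fin n)
  /-- green connector node for the pair `{i, j}` (with `i < j`); `fromSecond`
  tells whether it is the connector from color `j` (rather than from color `i`),
  and `isIndex` whether it is the index (rather than the remainder) connector -/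
  | conn (i j : Fin κ) (fromSecond : Bool) (isIndex : Bool)

variable {κ n : ℕ}

/-- The index (`isIndex = true`) or remainder (`isIndex = false`) connector
node from color `i` to the pair `{i, j}`. -/
def connFor (i j : Fin κ) (isIndex : Bool) : PreNode κ n :=
  if i < j then PreNode.conn i j false isIndex else PreNode.conn j i true isIndex

variable (G : SimpleGraph (Fin κ × Fin n))

/-- The pre-nodes actually present in the stars construction for the
Multicolored Clique instance `G`. -/
def Valid : PreNode κ n → Prop
  | PreNode.vblock _ => True
  | PreNode.vroot _ _ => True
  | PreNode.vleaf i _ j _ => j ≠ i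
  | PreNode.eblock i j => i < j
  | PreNode.eroot i j x y => i < j ∧ G.Adj (i, x) (j, y)
  | PreNode.eleaf i j x y _ _ => i < j ∧ G.Adj (i, x) (j, y)
  | PreNode.conn i j _ _ => i < j

/-- Nodes of the stars construction. -/
abbrev Node := {w : PreNode κ n // Valid G w}

/-- The base adjacency relation of the stars construction (to be symmetrized).
The first `ι(i,x) = x + 1` leaves of a group go to the index connector and the
remaining `n - ι(i,x)` leaves go to the remainder connector. -/
def Rel : PreNode κ n → PreNode κ n → Prop := fun a b =>
  (∃ i x, a = PreNode.vroot i x ∧ b = PreNode.vblock i) ∨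
  (∃ i x j p, a = PreNode.vleaf i x j p ∧ b = PreNode.vroot i x) ∨
  (∃ (i : Fin κ) (x : Fin n) (j : Fin κ) (p : Fin n), (p : ℕ) ≤ (x : ℕ) ∧
      a = PreNode.vleaf i x j p ∧ b = connFor i j true) ∨
  (∃ (i : Fin κ) (x : Fin n) (j : Fin κ) (p : Fin n), (x : ℕ) < (p : ℕ) ∧
      a = PreNode.vleaf i x j p ∧ b = connFor i j false) ∨
  (∃ i j x y, a = PreNode.eroot i j x y ∧ b = PreNode.eblock i j) ∨
  (∃ i j x y s p, a = PreNode.eleaf i j x y s p ∧ b = PreNode.eroot i j x y) ∨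
  (∃ (i j : Fin κ) (x y p : Fin n), (p : ℕ) ≤ (x : ℕ) ∧
      a = PreNode.eleaf i j x y false p ∧ b = connFor i j true) ∨
  (∃ (i j : Fin κ) (x y p : Fin n), (x : ℕ) < (p : ℕ) ∧
      a = PreNode.eleaf i j x y false p ∧ b = connFor i j false) ∨
  (∃ (i j : Fin κ) (x y p : Fin n), (p : ℕ) ≤ (y : ℕ) ∧
      a = PreNode.eleaf i j x y true p ∧ b = connFor j i true) ∨
  (∃ (i j : Fin κ) (x y p : Fin n), (y : ℕ) < (p : ℕ) ∧
      a = PreNode.eleaf i j x y true p ∧ b = connFor j i false)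

/-- The graph `H` of the stars construction. -/
def H : SimpleGraph (Node G) := SimpleGraph.fromRel (fun a b => Rel a.1 b.1)

/-- The initial configuration: all leaves of all star vertex-gadgets. -/
def initialS : Set (Node G) := {w | ∃ i x j p, w.1 = PreNode.vleaf i x j p}

/-- The leaves of the star vertex-gadget for the vertex `(i, x)`. -/
def vertexGadgetLeaves (i : Fin κ) (x : Fin n) : Set (Node G) :=
  {w | ∃ j p, w.1 = PreNode.vleaf i x j p}

/-- The leaves of the star edge-gadget for the edge `(i,x)(j,y)`. -/
def edgeGadgetLeaves (i j : Fin κ) (x y : Fin n) : Set (Node G) :=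
  {w | ∃ s p, w.1 = PreNode.eleaf i j x y s p}

/-- A stars solution: a set `T` of nodes with `|T| = |S|` satisfying
conditions (S1), (S2) and (S3). -/
def IsStarsSolution (T : Set (Node G)) : Prop :=
  T.ncard = (initialS G).ncard ∧
  -- (S1): no block, root, or connector node is in `T`
  (∀ w ∈ T, (∃ i x j p, w.1 = PreNode.vleaf i x j p) ∨
      (∃ i j x y s p, w.1 = PreNode.eleaf i j x y s p)) ∧
  -- (S2): in each vertex-block exactly one vertex-gadget has none of its
  -- leaves in `T`, and every other vertex-gadget has all of its leaves in `T`
  (∀ i : Fin κ, ∃ x : Fin n,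
      vertexGadgetLeaves G i x ∩ T = ∅ ∧
      ∀ x' : Fin n, x' ≠ x → vertexGadgetLeaves G i x' ⊆ T) ∧
  -- (S3): in each edge-block exactly one edge-gadget has all of its leaves in
  -- `T`, and every other edge-gadget has none of its leaves in `T`
  (∀ i j : Fin κ, i < j → ∃ x y : Fin n, G.Adj (i, x) (j, y) ∧
      edgeGadgetLeaves G i j x y ⊆ T ∧
      ∀ x' y' : Fin n, G.Adj (i, x') (j, y') → (x', y') ≠ (x, y) →
        edgeGadgetLeaves G i j x' y' ∩ T = ∅)

/-- The Multicolored Clique instance is a yes-instance: there is a clique of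
`G` with exactly one vertex from each color class. -/
def MCCYes : Prop :=
  ∃ f : Fin κ → Fin n, ∀ i j : Fin κ, i ≠ j → G.Adj (i, f i) (j, f j)

end StarsConstruction

/-- Every connected component of `K` is a star `K_{1,m}` for some `m ≥ 0`. -/
def ComponentsAreStars {W : Type*} (K : SimpleGraph W) : Prop :=
  ∀ C : K.ConnectedComponent, ∃ c ∈ C.supp,
    ∀ a ∈ C.supp, ∀ b ∈ C.supp, K.Adj a b ↔ ((a = c ∨ b = c) ∧ a ≠ b)

/-- `X` is a modulator to stars of `K`: every connected component of `K − X`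
is a star. -/
def IsStarsModulator {W : Type*} (K : SimpleGraph W) (X : Set W) : Prop :=
  ComponentsAreStars (SimpleGraph.induce Xᶜ K)

/-- The modulator to stars number: the minimum size of a modulator to stars. -/
noncomputable def starsModulatorNumber {W : Type*} (K : SimpleGraph W) : ℕ :=
  sInf {k | ∃ X : Set W, IsStarsModulator K X ∧ X.ncard = k}

/-! Every edge of `H` avoiding the blocks and connectors joins a leaf of some gadget to the root of
that gadget. After their deletion, the map sending a node to the root of its gadget is therefore
constant along edges, hence on components, so the components are the gadgets, which are stars. For
the size, each color contributes one vertex block node, and each pair of colors contributes its edge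
block node and four connectors. -/

theorem componentsAreStars_of_adj_iff {W : Type*} {K : SimpleGraph W} (center : W → W)
    (idem : ∀ a, center (center a) = center a)
    (adj_iff : ∀ a b, K.Adj a b ↔ a ≠ b ∧ (center a = b ∨ center b = a)) :
    ComponentsAreStars K := by
  refine SimpleGraph.ConnectedComponent.ind fun v ↦ ?_
  have eq_of_adj {a b : W} (h : K.Adj a b) : center a = center b := by
    rcases ((adj_iff a b).1 h).2 with rfl | rfl
    · exact (idem a).symm
    · exact idem b
  have eq_of_reachable {a b : W} : K.Reachable a b → center a = center b := by
    rintro ⟨p⟩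
    induction p with
    | nil => rfl
    | cons h _ ih => exact (eq_of_adj h).trans ih
  have eq_of_mem {a : W} (ha : a ∈ (K.connectedComponentMk v).supp) : center a = center v :=
    eq_of_reachable (SimpleGraph.ConnectedComponent.exact ha)
  have center_mem : center v ∈ (K.connectedComponentMk v).supp := by
    rw [SimpleGraph.ConnectedComponent.mem_supp_iff, SimpleGraph.ConnectedComponent.eq]
    by_cases h : center v = v
    · rw [h]
    · exact ((adj_iff _ _).2 ⟨h, .inr rfl⟩).reachable
  refine ⟨center v, center_mem, fun a ha b hb ↦ ?_⟩
  rw [adj_iff, eq_of_mem ha, eq_of_mem hb, eq_comm (a := center v) (b := b),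
    eq_comm (a := center v) (b := a), or_comm, and_comm]

theorem starsModulatorNumber_le_ncard {W : Type*} {K : SimpleGraph W} {X : Set W}
    (hX : IsStarsModulator K X) : starsModulatorNumber K ≤ X.ncard :=
  Nat.sInf_le ⟨X, hX, rfl⟩

namespace StarsConstruction

variable {κ n : ℕ}

/-- The root of the star gadget containing a root or leaf node. The nodes outside the gadgets are
fixed, which makes the map total and idempotent. -/
def gadgetRoot : PreNode κ n → PreNode κ n
  | .vleaf i x _ _ => .vroot i x
  | .eleaf i j x y _ _ => .eroot i j x y
  | w => w

theorem gadgetRoot_gadgetRoot (w : PreNode κ n) : gadgetRoot (gadgetRoot w) = gadgetRoot w := by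
  cases w <;> rfl

/-- The nodes lying in no gadget: the connector, edge block and vertex block nodes. -/
def IsConnectorOrBlock (w : PreNode κ n) : Prop :=
  (∃ i j s k, w = .conn i j s k) ∨ (∃ i j, w = .eblock i j) ∨ (∃ i, w = .vblock i)

theorem isConnectorOrBlock_connFor (i j : Fin κ) (k : Bool) :
    IsConnectorOrBlock (connFor i j k : PreNode κ n) := by
  unfold connFor
  split_ifs <;> exact .inl ⟨_, _, _, _, rfl⟩

theorem isConnectorOrBlock_gadgetRoot_iff {w : PreNode κ n} :
    IsConnectorOrBlock (gadgetRoot w) ↔ IsConnectorOrBlock w := by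
  cases w <;> simp [gadgetRoot, IsConnectorOrBlock]

theorem rel_iff_gadgetRoot_eq {a b : PreNode κ n} (hb : ¬ IsConnectorOrBlock b) :
    Rel a b ↔ a ≠ b ∧ gadgetRoot a = b := by
  constructor
  · have hconn (i j : Fin κ) (k : Bool) : b ≠ connFor i j k := by
      rintro rfl
      exact hb (isConnectorOrBlock_connFor i j k)
    rintro (⟨i, _, rfl, rfl⟩ | ⟨_, _, _, _, rfl, rfl⟩ | ⟨_, _, _, _, -, -, h⟩ |
      ⟨_, _, _, _, -, -, h⟩ | ⟨i, j, _, _, rfl, rfl⟩ | ⟨_, _, _, _, _, _, rfl, rfl⟩ |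
      ⟨_, _, _, _, _, -, -, h⟩ | ⟨_, _, _, _, _, -, -, h⟩ |
      ⟨_, _, _, _, _, -, -, h⟩ | ⟨_, _, _, _, _, -, -, h⟩)
    · exact absurd (.inr (.inr ⟨i, rfl⟩)) hb
    · exact ⟨nofun, rfl⟩
    · exact absurd h (hconn _ _ _)
    · exact absurd h (hconn _ _ _)
    · exact absurd (.inr (.inl ⟨i, j, rfl⟩)) hb
    · exact ⟨nofun, rfl⟩
    all_goals exact absurd h (hconn _ _ _)
  · rintro ⟨hne, rfl⟩
    cases a with
    | vleaf i x j p => exact .inr (.inl ⟨i, x, j, p, rfl, rfl⟩)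
    | eleaf i j x y s p =>
      exact .inr (.inr (.inr (.inr (.inr (.inl ⟨i, j, x, y, s, p, rfl, rfl⟩)))))
    | _ => exact absurd rfl hne

variable {G : SimpleGraph (Fin κ × Fin n)}

theorem valid_gadgetRoot {w : PreNode κ n} (hw : Valid G w) : Valid G (gadgetRoot w) := by
  cases w <;> first | exact hw | trivial

variable (G) in
/-- The modulator of the construction: all connector, edge block and vertex block nodes. -/
def modulator : Set (Node G) := {w | IsConnectorOrBlock w.1}

theorem H_adj_iff {a b : Node G} (ha : a ∉ modulator G) (hb : b ∉ modulator G) :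
    (H G).Adj a b ↔ a ≠ b ∧ (gadgetRoot a.1 = b.1 ∨ gadgetRoot b.1 = a.1) := by
  rw [H, SimpleGraph.fromRel_adj, rel_iff_gadgetRoot_eq hb, rel_iff_gadgetRoot_eq ha,
    ne_eq, Subtype.ext_iff]
  tauto

variable (G)

theorem isStarsModulator_modulator : IsStarsModulator (H G) (modulator G) := by
  let root (a : ↥(modulator G)ᶜ) : ↥(modulator G)ᶜ :=
    ⟨⟨gadgetRoot a.1.1, valid_gadgetRoot a.1.2⟩, mt isConnectorOrBlock_gadgetRoot_iff.1 a.2⟩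
  have root_eq_iff (a b : ↥(modulator G)ᶜ) : root a = b ↔ gadgetRoot a.1.1 = b.1.1 := by
    rw [Subtype.ext_iff, Subtype.ext_iff]
  refine componentsAreStars_of_adj_iff root
    (fun a ↦ (root_eq_iff _ _).2 (gadgetRoot_gadgetRoot a.1.1)) fun a b ↦ ?_
  rw [root_eq_iff, root_eq_iff, ne_eq, Subtype.ext_iff]
  exact H_adj_iff a.2 b.2

/-- An enumeration of the modulator: a vertex block node for each color and, for each pair of
colors, the edge block node (`none`) together with four connectors. -/
def modulatorNode : Fin κ ⊕ (Fin κ × Fin κ) × Option (Bool × Bool) → PreNode κ n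
  | .inl i => .vblock i
  | .inr ((i, j), none) => .eblock i j
  | .inr ((i, j), some (s, k)) => .conn i j s k

/-- The domain of `modulatorNode` on which its values are nodes: a pair of colors is listed in
increasing order. -/
def modulatorIndices (κ : ℕ) : Finset (Fin κ ⊕ (Fin κ × Fin κ) × Option (Bool × Bool)) :=
  Finset.univ.disjSum (({p | p.1 < p.2} : Finset (Fin κ × Fin κ)) ×ˢ Finset.univ)

theorem card_modulatorIndices (κ : ℕ) : (modulatorIndices κ).card = 5 * κ.choose 2 + κ := by
  rw [modulatorIndices, Finset.card_disjSum, Finset.card_product, Fintype.card_product_filter_lt]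
  simp only [Finset.card_univ, Fintype.card_fin, Fintype.card_option, Fintype.card_prod,
    Fintype.card_bool]
  ring

theorem image_val_modulator_subset :
    Subtype.val '' modulator G ⊆ modulatorNode '' modulatorIndices κ := by
  rintro _ ⟨⟨w, hw⟩, ⟨i, j, s, k, rfl⟩ | ⟨i, j, rfl⟩ | ⟨i, rfl⟩, rfl⟩
  · exact ⟨.inr ((i, j), some (s, k)), by simpa [modulatorIndices, Valid] using hw, rfl⟩
  · exact ⟨.inr ((i, j), none), by simpa [modulatorIndices, Valid] using hw, rfl⟩
  · exact ⟨.inl i, by simp [modulatorIndices], rfl⟩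

theorem ncard_modulator_le : (modulator G).ncard ≤ 5 * κ.choose 2 + κ :=
  calc
    (modulator G).ncard = (Subtype.val '' modulator G).ncard :=
      (Set.ncard_image_of_injective _ Subtype.val_injective).symm
    _ ≤ (modulatorNode '' modulatorIndices κ : Set (PreNode κ n)).ncard :=
      Set.ncard_le_ncard (image_val_modulator_subset G) ((modulatorIndices κ).finite_toSet.image _)
    _ ≤ (modulatorIndices κ).card :=
      (Set.ncard_image_le (Finset.finite_toSet _)).trans_eq (Set.ncard_coe_finset _)
    _ = 5 * κ.choose 2 + κ := card_modulatorIndices κ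

end StarsConstruction

open StarsConstruction in
/-- For the graph `H` of the stars construction, the set of all green
connector nodes, gray edge block nodes and teal vertex block nodes is a
modulator to stars; consequently `ms(H) ≤ 5·(κ choose 2) + κ`. -/
theorem stars_modulator_number_le {κ n : ℕ} (G : SimpleGraph (Fin κ × Fin n)) :
    IsStarsModulator (H G)
      {w : Node G | (∃ i j s k, w.1 = PreNode.conn i j s k) ∨
        (∃ i j, w.1 = PreNode.eblock i j) ∨ (∃ i, w.1 = PreNode.vblock i)} ∧
    starsModulatorNumber (H G) ≤ 5 * Nat.choose κ 2 + κ :=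
  ⟨isStarsModulator_modulator G,
    (starsModulatorNumber_le_ncard (isStarsModulator_modulator G)).trans (ncard_modulator_le G)⟩
end

section
/- If the Multicolored Clique instance (G, κ) is a yes-instance, then in the graph H of the stars construction there exists a stars solution T that is reachable from the initial configuration S (all leaves of all vertex-gadgets) within the budget b = 2n(κ−1)κ token slides in the discovery token sliding model. -/
/-!
Each token on the leaves of a selected vertex's gadget needs only two slides: the `p`-th leaf of the
group for color `j` in the gadget of `(i, f i)` and the `p`-th leaf of the group for `(i, f i)` in
the gadget of the edge `(i, f i)(j, f j)` hang on the same connector, because both choose between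
index and remainder by comparing `p` with the same index. All other tokens stay put, and exactly
`n (κ - 1)` tokens per color move. Since tokens may share a vertex, they can be moved one after
another, so the total cost is the sum of the individual walk lengths.
-/

namespace TokenDiscovery

/-- The configuration graph of the discovery token sliding model: two configurations are adjacent
when they differ by one token slide, so its walks are the transformation sequences. -/
def slideGraph {V : Type*} (G : SimpleGraph V) (α : Type*) : SimpleGraph (α → V) where
  Adj := Step G
  symm := ⟨fun _ _ ⟨a, hadj, hrest⟩ => ⟨a, hadj.symm, fun b hb => (hrest b hb).symm⟩⟩
  loopless := ⟨fun _ ⟨_, hadj, _⟩ => G.irrefl hadj⟩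

variable {V α : Type*} {G : SimpleGraph V} {c g : α → V}

/-- Moving only the token `a` of the configuration `c`, as a homomorphism of graphs: it turns walks
of `G` into transformation sequences of the same length. -/
def moveToken [DecidableEq α] (G : SimpleGraph V) (c : α → V) (a : α) : G →g slideGraph G α where
  toFun := Function.update c a
  map_rel' hadj := ⟨a, by simpa only [Function.update_self] using hadj,
    fun b hb => by simp only [Function.update_of_ne hb]⟩

theorem exists_walk_piecewise [DecidableEq α] (w : ∀ a, G.Walk (c a) (g a)) (s : Finset α) :
    ∃ W : (slideGraph G α).Walk c (s.piecewise g c), W.length = ∑ a ∈ s, (w a).length := by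
  induction s using Finset.induction_on with
  | empty => exact ⟨SimpleGraph.Walk.nil.copy rfl (Finset.piecewise_empty g c).symm, by simp⟩
  | insert a s ha ih =>
    obtain ⟨W, hW⟩ := ih
    have source : moveToken G (s.piecewise g c) a (c a) = s.piecewise g c := by
      rw [← Finset.piecewise_eq_of_notMem s g c ha]
      exact Function.update_eq_self a _
    have target : moveToken G (s.piecewise g c) a (g a) = (insert a s).piecewise g c :=
      (Finset.piecewise_insert s g c a).symm
    refine ⟨W.append (((w a).map (moveToken G _ a)).copy source target), ?_⟩
    rw [SimpleGraph.Walk.length_append, SimpleGraph.Walk.length_copy, SimpleGraph.Walk.length_map,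
      hW, Finset.sum_insert ha, add_comm]

theorem reachable_of_slideGraph_walk (W : (slideGraph G α).Walk c g) (hg : Function.Injective g) :
    Reachable G c (Set.range g) W.length :=
  ⟨W.length, W.getVert, le_rfl, W.getVert_zero, fun _ hi => W.adj_getVert_succ hi,
    by rwa [W.getVert_length], by rw [W.getVert_length]⟩

theorem reachable_of_walks [Fintype α] (w : ∀ a, G.Walk (c a) (g a)) (hg : Function.Injective g) :
    Reachable G c (Set.range g) (∑ a, (w a).length) := by
  classical
  obtain ⟨W, hW⟩ : ∃ W : (slideGraph G α).Walk c g, W.length = ∑ a, (w a).length := by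
    have total := exists_walk_piecewise w Finset.univ
    rwa [Finset.piecewise_univ] at total
  exact hW ▸ reachable_of_slideGraph_walk W hg

end TokenDiscovery

namespace StarsConstruction

variable {κ n : ℕ}

section Construction

variable {G : SimpleGraph (Fin κ × Fin n)} {i j : Fin κ} {x y p : Fin n}

/-- The `p`-th leaf of the group for `(i, x)` in the star edge-gadget for the edge `(i,x)(j,y)`,
whichever of the two colors is the smaller one (compare `connFor`). -/
def edgeLeafFor (i j : Fin κ) (x y p : Fin n) : PreNode κ n :=
  if i < j then PreNode.eleaf i j x y false p else PreNode.eleaf j i y x true p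

theorem valid_edgeLeafFor (hij : i ≠ j) (hadj : G.Adj (i, x) (j, y)) :
    Valid G (edgeLeafFor i j x y p) := by
  unfold edgeLeafFor
  split_ifs with hlt
  · exact ⟨hlt, hadj⟩
  · exact ⟨hij.symm.lt_of_le (not_lt.1 hlt), hadj.symm⟩

theorem valid_connFor (hij : i ≠ j) (isIndex : Bool) : Valid G (connFor i j isIndex) := by
  unfold connFor
  split_ifs with hlt
  · exact hlt
  · exact hij.symm.lt_of_le (not_lt.1 hlt)

theorem rel_vleaf_connFor (i j : Fin κ) (x p : Fin n) :
    Rel (PreNode.vleaf i x j p) (connFor i j (decide (p ≤ x))) := by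
  by_cases hp : p ≤ x
  · exact .inr <| .inr <| .inl ⟨i, x, j, p, hp, rfl, by rw [decide_eq_true hp]⟩
  · exact .inr <| .inr <| .inr <| .inl ⟨i, x, j, p, not_le.1 hp, rfl, by rw [decide_eq_false hp]⟩

theorem rel_edgeLeafFor_connFor (i j : Fin κ) (x y p : Fin n) :
    Rel (edgeLeafFor i j x y p) (connFor i j (decide (p ≤ x))) := by
  unfold edgeLeafFor Rel
  split_ifs with hlt <;> by_cases hp : p ≤ x
  · exact .inr <| .inr <| .inr <| .inr <| .inr <| .inr <| .inl
      ⟨i, j, x, y, p, hp, rfl, by rw [decide_eq_true hp]⟩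
  · exact .inr <| .inr <| .inr <| .inr <| .inr <| .inr <| .inr <| .inl
      ⟨i, j, x, y, p, not_le.1 hp, rfl, by rw [decide_eq_false hp]⟩
  · exact .inr <| .inr <| .inr <| .inr <| .inr <| .inr <| .inr <| .inr <| .inl
      ⟨j, i, y, x, p, hp, rfl, by rw [decide_eq_true hp]⟩
  · exact .inr <| .inr <| .inr <| .inr <| .inr <| .inr <| .inr <| .inr <| .inr
      ⟨j, i, y, x, p, not_le.1 hp, rfl, by rw [decide_eq_false hp]⟩

theorem ne_of_rel {u v : PreNode κ n} (h : Rel u v) : u ≠ v := by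
  rintro rfl
  unfold Rel connFor at h
  grind (splits := 16)

theorem adj_of_rel {u v : Node G} (h : Rel u.1 v.1) : (H G).Adj u v :=
  (SimpleGraph.fromRel_adj _ _ _).2 ⟨fun huv => ne_of_rel h (congrArg Subtype.val huv), .inl h⟩

theorem exists_walk_vleaf_edgeLeafFor (hij : i ≠ j) {u v : Node G}
    (hu : u.1 = PreNode.vleaf i x j p) (hv : v.1 = edgeLeafFor i j x y p) :
    ∃ w : (H G).Walk u v, w.length = 2 := by
  let connector : Node G := ⟨connFor i j (decide (p ≤ x)), valid_connFor hij _⟩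
  have leave : (H G).Adj u connector := adj_of_rel (hu ▸ rel_vleaf_connFor i j x p)
  have arrive : (H G).Adj v connector := adj_of_rel (hv ▸ rel_edgeLeafFor_connFor i j x y p)
  exact ⟨.cons leave (.cons arrive.symm .nil), rfl⟩

end Construction

/-- Index type of the leaves of the vertex-gadgets: color `i`, vertex of that color, color of the
group, position in the group. -/
abbrev VertexLeafIndex (κ n : ℕ) : Type :=
  (i : Fin κ) × Fin n × {j : Fin κ // j ≠ i} × Fin n

/-- The tokens of the initial configuration, enumerated by the leaves they stand on. -/
noncomputable def vertexLeafEquiv (G : SimpleGraph (Fin κ × Fin n)) :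
    VertexLeafIndex κ n ≃ ↥(initialS G) :=
  Equiv.ofBijective
    (fun ⟨i, x, j, p⟩ => ⟨⟨PreNode.vleaf i x j p, j.2⟩, i, x, j, p, rfl⟩) <| by
    constructor
    · rintro ⟨i, x, ⟨j, hj⟩, p⟩ ⟨i', x', ⟨j', hj'⟩, p'⟩ h
      have hleaf : PreNode.vleaf i x j p = PreNode.vleaf i' x' j' p' :=
        congrArg (fun a => a.1.1) h
      cases hleaf
      rfl
    · rintro ⟨⟨w, hj⟩, i, x, j, p, hw⟩
      obtain rfl : w = PreNode.vleaf i x j p := hw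
      exact ⟨⟨i, x, ⟨j, hj⟩, p⟩, rfl⟩

noncomputable instance (G : SimpleGraph (Fin κ × Fin n)) : Fintype ↥(initialS G) :=
  Fintype.ofEquiv _ (vertexLeafEquiv G)

section Clique

variable {G : SimpleGraph (Fin κ × Fin n)} {f : Fin κ → Fin n}

/-- The vertices `(i, f i)`, one of each color, form a clique. -/
def IsMulticoloredClique (G : SimpleGraph (Fin κ × Fin n)) (f : Fin κ → Fin n) : Prop :=
  ∀ i j : Fin κ, i ≠ j → G.Adj (i, f i) (j, f j)

/-- The pre-nodes holding a token in the stars solution that encodes the selection `f`. -/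
def Occupied (f : Fin κ → Fin n) : PreNode κ n → Prop
  | PreNode.vleaf i x _ _ => x ≠ f i
  | PreNode.eleaf i j x y _ _ => x = f i ∧ y = f j
  | _ => False

/-- The stars solution that encodes the selection `f`: it empties the gadgets of the selected
vertices and fills the gadgets of the edges between them. -/
def cliqueSolution (G : SimpleGraph (Fin κ × Fin n)) (f : Fin κ → Fin n) : Set (Node G) :=
  {w | Occupied f w.1}

/-- The destination of the token on a given vertex-gadget leaf. Only the values at such leaves
matter; other pre-nodes are fixed to keep the function total. -/
def cliqueTarget (f : Fin κ → Fin n) : PreNode κ n → PreNode κ n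
  | PreNode.vleaf i x j p =>
    if x = f i then edgeLeafFor i j (f i) (f j) p else PreNode.vleaf i x j p
  | w => w

/-- The number of slides the token on a given vertex-gadget leaf makes to its destination. -/
def slideCost (f : Fin κ → Fin n) : PreNode κ n → ℕ
  | PreNode.vleaf i x _ _ => if x = f i then 2 else 0
  | _ => 0

theorem valid_cliqueTarget (hf : IsMulticoloredClique G f) (w : PreNode κ n) (hw : Valid G w) :
    Valid G (cliqueTarget f w) := by
  cases w with
  | vleaf i x j p =>
    have hij : i ≠ j := Ne.symm hw
    simp only [cliqueTarget]
    split_ifs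
    · exact valid_edgeLeafFor hij (hf i j hij)
    · exact hw
  | _ => exact hw

/-- `cliqueTarget` as a map on the nodes of the stars construction. -/
def cliqueMove (hf : IsMulticoloredClique G f) : Node G → Node G :=
  Subtype.map (cliqueTarget f) (valid_cliqueTarget hf)

theorem mapsTo_cliqueMove (hf : IsMulticoloredClique G f) :
    Set.MapsTo (cliqueMove hf) (initialS G) (cliqueSolution G f) := by
  rintro ⟨_, _⟩ ⟨i, x, j, p, rfl⟩
  change Occupied f (cliqueTarget f (PreNode.vleaf i x j p))
  simp only [cliqueTarget, edgeLeafFor]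
  split_ifs with hx
  · exact ⟨rfl, rfl⟩
  · exact ⟨rfl, rfl⟩
  · exact hx

theorem injOn_cliqueMove (hf : IsMulticoloredClique G f) :
    Set.InjOn (cliqueMove hf) (initialS G) := by
  rintro ⟨_, _⟩ ⟨i, x, j, p, rfl⟩ ⟨_, _⟩ ⟨i', x', j', p', rfl⟩ h
  have htarget : cliqueTarget f (PreNode.vleaf i x j p) =
      cliqueTarget f (PreNode.vleaf i' x' j' p') := congrArg Subtype.val h
  simp only [cliqueTarget, edgeLeafFor] at htarget
  grind

theorem surjOn_cliqueMove (hf : IsMulticoloredClique G f) :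
    Set.SurjOn (cliqueMove hf) (initialS G) (cliqueSolution G f) := by
  rintro ⟨w, hw⟩ hocc
  match w, hw, hocc with
  | PreNode.vleaf i x j p, hw, hx =>
    exact ⟨⟨_, hw⟩, ⟨i, x, j, p, rfl⟩, Subtype.ext (if_neg hx)⟩
  | PreNode.eleaf i j _ _ false p, ⟨hlt, _⟩, ⟨rfl, rfl⟩ =>
    exact ⟨⟨PreNode.vleaf i (f i) j p, hlt.ne'⟩, ⟨i, f i, j, p, rfl⟩,
      Subtype.ext ((if_pos rfl).trans (if_pos hlt))⟩
  | PreNode.eleaf i j _ _ true p, ⟨hlt, _⟩, ⟨rfl, rfl⟩ =>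
    exact ⟨⟨PreNode.vleaf j (f j) i p, hlt.ne⟩, ⟨j, f j, i, p, rfl⟩,
      Subtype.ext ((if_pos rfl).trans (if_neg hlt.not_gt))⟩

theorem bijOn_cliqueMove (hf : IsMulticoloredClique G f) :
    Set.BijOn (cliqueMove hf) (initialS G) (cliqueSolution G f) :=
  ⟨mapsTo_cliqueMove hf, injOn_cliqueMove hf, surjOn_cliqueMove hf⟩

theorem isStarsSolution_cliqueSolution (hf : IsMulticoloredClique G f) :
    IsStarsSolution G (cliqueSolution G f) := by
  refine ⟨?card, ?leaves, fun i => ⟨f i, ?emptied, ?untouched⟩,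
    fun i j hij => ⟨f i, f j, hf i j hij.ne, ?filled, ?unused⟩⟩
  case card =>
    rw [← (bijOn_cliqueMove hf).image_eq, (injOn_cliqueMove hf).ncard_image]
  case leaves =>
    rintro ⟨w, hw⟩ hocc
    match w, hw, hocc with
    | PreNode.vleaf i x j p, _, _ => exact .inl ⟨i, x, j, p, rfl⟩
    | PreNode.eleaf i j x y s p, _, _ => exact .inr ⟨i, j, x, y, s, p, rfl⟩
  case emptied =>
    refine Set.eq_empty_of_forall_notMem ?_
    rintro ⟨_, _⟩ ⟨⟨j, p, rfl⟩, hocc⟩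
    exact hocc rfl
  case untouched =>
    rintro x hx ⟨_, -⟩ ⟨j, p, rfl⟩
    exact hx
  case filled =>
    rintro ⟨_, _⟩ ⟨s, p, rfl⟩
    exact ⟨rfl, rfl⟩
  case unused =>
    refine fun x y _ hne => Set.eq_empty_of_forall_notMem ?_
    rintro ⟨_, _⟩ ⟨⟨s, p, rfl⟩, hx, hy⟩
    exact hne (Prod.ext hx hy)

theorem exists_walk_cliqueMove (hf : IsMulticoloredClique G f) (a : ↥(initialS G)) :
    ∃ w : (H G).Walk a.1 (cliqueMove hf a.1), w.length = slideCost f a.1.1 := by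
  obtain ⟨⟨u, hj⟩, i, x, j, p, hu⟩ := a
  obtain rfl : u = PreNode.vleaf i x j p := hu
  by_cases hx : x = f i
  · subst hx
    simpa only [slideCost, if_true] using
      exists_walk_vleaf_edgeLeafFor (Ne.symm hj) rfl (if_pos rfl)
  · have hfixed : cliqueMove hf ⟨PreNode.vleaf i x j p, hj⟩ = ⟨PreNode.vleaf i x j p, hj⟩ :=
      Subtype.ext (if_neg hx)
    exact ⟨SimpleGraph.Walk.nil.copy rfl hfixed.symm, by simp [slideCost, hx]⟩

theorem sum_slideCost (G : SimpleGraph (Fin κ × Fin n)) (f : Fin κ → Fin n) :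
    ∑ a : ↥(initialS G), slideCost f a.1.1 = 2 * n * (κ - 1) * κ :=
  calc ∑ a : ↥(initialS G), slideCost f a.1.1
      = ∑ t : VertexLeafIndex κ n, if t.2.1 = f t.1 then 2 else 0 :=
        ((vertexLeafEquiv G).sum_comp fun a => slideCost f a.1.1).symm
    _ = ∑ i : Fin κ, ∑ x : Fin n, ∑ _ : {j : Fin κ // j ≠ i} × Fin n, if x = f i then 2 else 0 := by
        simp only [Fintype.sum_sigma, Fintype.sum_prod_type]
    _ = ∑ _ : Fin κ, (κ - 1) * n * 2 := by
        simp
    _ = 2 * n * (κ - 1) * κ := by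
        rw [Finset.sum_const, Finset.card_univ, Fintype.card_fin, smul_eq_mul]
        ring

theorem reachable_cliqueSolution (hf : IsMulticoloredClique G f) :
    TokenDiscovery.Reachable (H G) (fun a : ↥(initialS G) => (a : Node G)) (cliqueSolution G f)
      (2 * n * (κ - 1) * κ) := by
  choose w hw using exists_walk_cliqueMove hf
  have hinj : Function.Injective fun a : ↥(initialS G) => cliqueMove hf a.1 :=
    (injOn_cliqueMove hf).injective
  have hrange : Set.range (fun a : ↥(initialS G) => cliqueMove hf a.1) = cliqueSolution G f := by
    rw [← Set.image_eq_range, (bijOn_cliqueMove hf).image_eq]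
  have hcost : ∑ a, (w a).length = 2 * n * (κ - 1) * κ := by
    simp only [hw, sum_slideCost]
  simpa only [hrange, hcost] using TokenDiscovery.reachable_of_walks w hinj

end Clique

end StarsConstruction

open StarsConstruction in
/-- If the Multicolored Clique instance is a yes-instance, then in the graph of
the stars construction some stars solution is reachable from the initial
configuration (all leaves of all vertex-gadgets) within `2n(κ−1)κ` token
slides in the discovery token sliding model. -/
theorem stars_solution_of_mcc_yes {κ n : ℕ} (G : SimpleGraph (Fin κ × Fin n))
    (h : MCCYes G) :
    ∃ T : Set (Node G), IsStarsSolution G T ∧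
      TokenDiscovery.Reachable (H G) (fun a : ↥(initialS G) => (a : Node G)) T
        (2 * n * (κ - 1) * κ) := by
  obtain ⟨f, hf⟩ := h
  exact ⟨cliqueSolution G f, isStarsSolution_cliqueSolution hf, reachable_cliqueSolution hf⟩
end

section
/- Let T be a stars solution in the graph H of the stars construction and let a transformation sequence of at most b = 2n(κ−1)κ token slides in the discovery token sliding model move the initial configuration S to T. Then: (i) every token that moves performs exactly two token slides and its intermediate vertex is a green connector node; (ii) for each edge-block, T contains all 2n leaves of exactly one edge-gadget of that block; (iii) for each vertex-block, exactly n(κ−1) tokens slide out of the block, all coming from exactly one vertex-gadget of that block. -/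
/-!
A token that ends outside `S` travels from a leaf of a vertex-gadget to a leaf of an edge-gadget.
Two such leaves are never adjacent, so it slides at least twice. A stars solution misses exactly
`n(κ-1)` vertices of `S` in each of the `κ` vertex-blocks, so exactly `n(κ-1)κ` tokens have to end
outside `S`, which uses up the whole budget of `2n(κ-1)κ`: those tokens slide exactly twice and all
other tokens never move. The vertex between the two slides is a common neighbour of a leaf of a
vertex-gadget and a leaf of an edge-gadget, hence a connector node.
-/

namespace TokenDiscovery

section SlideTimes

variable {V α : Type*} {G : SimpleGraph V} {m : ℕ} {f : ℕ → α → V} {a : α}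

/-- A transformation sequence of `m` token slides. The sequence of configurations is indexed by all
of `ℕ`, and what it does after time `m` is irrelevant. -/
def IsTransformation (G : SimpleGraph V) (m : ℕ) (f : ℕ → α → V) : Prop :=
  ∀ i : ℕ, i < m → Step G (f i) (f (i + 1))

/-- The times at which the token `a` slides: `i` stands for the slide from `f i` to `f (i + 1)`. -/
def slideTimes (f : ℕ → α → V) (m : ℕ) (a : α) : Set ℕ :=
  {i | i < m ∧ f (i + 1) a ≠ f i a}

theorem slideTimes_subset_Iio : slideTimes f m a ⊆ Set.Iio m := fun _ hi => hi.1

theorem finite_slideTimes : (slideTimes f m a).Finite :=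
  (Set.finite_Iio m).subset slideTimes_subset_Iio

theorem eq_of_forall_notMem_slideTimes {s t : ℕ} (hst : s ≤ t) (htm : t ≤ m)
    (h : ∀ i, s ≤ i → i < t → i ∉ slideTimes f m a) : f t a = f s a := by
  induction t, hst using Nat.le_induction with
  | base => rfl
  | succ t hst ih =>
    have hstay : f (t + 1) a = f t a := by
      by_contra hne
      exact h t hst t.lt_succ_self ⟨htm, hne⟩
    exact hstay.trans (ih (by lia) fun i hsi hit => h i hsi (by lia))

theorem eq_of_slideTimes_eq_empty (h : slideTimes f m a = ∅) : f m a = f 0 a :=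
  eq_of_forall_notMem_slideTimes m.zero_le le_rfl (by simp [h])

theorem IsTransformation.adj_of_mem_slideTimes (hf : IsTransformation G m f) {i : ℕ}
    (hi : i ∈ slideTimes f m a) : G.Adj (f i a) (f (i + 1) a) := by
  obtain ⟨b, hadj, hstay⟩ := hf i hi.1
  obtain rfl : a = b := by_contra fun hab => hi.2 (hstay a hab)
  exact hadj

theorem IsTransformation.pairwise_disjoint_slideTimes (hf : IsTransformation G m f) :
    Pairwise (Function.onFun Disjoint (slideTimes f m)) := by
  refine fun a b hab => Set.disjoint_left.2 fun i ha hb => ?_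
  obtain ⟨c, -, hstay⟩ := hf i ha.1
  have hac : a = c := by_contra fun h => ha.2 (hstay a h)
  have hbc : b = c := by_contra fun h => hb.2 (hstay b h)
  exact hab (hac.trans hbc.symm)

theorem IsTransformation.sum_ncard_slideTimes_le [Fintype α] (hf : IsTransformation G m f) :
    ∑ a, (slideTimes f m a).ncard ≤ m := by
  rw [← finsum_eq_sum_of_fintype, ← Set.ncard_iUnion_of_finite (fun _ => finite_slideTimes)
    hf.pairwise_disjoint_slideTimes]
  calc (⋃ a, slideTimes f m a).ncard
      ≤ (Set.Iio m).ncard :=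
        Set.ncard_le_ncard (Set.iUnion_subset fun _ => slideTimes_subset_Iio) (Set.finite_Iio m)
    _ = m := by simp [Set.ncard_eq_toFinset_card']

theorem IsTransformation.adj_of_slideTimes_eq_singleton (hf : IsTransformation G m f) {i : ℕ}
    (h : slideTimes f m a = {i}) : G.Adj (f 0 a) (f m a) := by
  have hi : i ∈ slideTimes f m a := by simp [h]
  have hbefore : f i a = f 0 a :=
    eq_of_forall_notMem_slideTimes i.zero_le hi.1.le <| by
      simp only [h, Set.mem_singleton_iff]; lia
  have hafter : f m a = f (i + 1) a :=
    eq_of_forall_notMem_slideTimes hi.1 le_rfl <| by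
      simp only [h, Set.mem_singleton_iff]; lia
  simpa only [hbefore, hafter] using hf.adj_of_mem_slideTimes hi

theorem IsTransformation.adj_adj_of_slideTimes_eq_pair (hf : IsTransformation G m f) {i j : ℕ}
    (hij : i < j) (h : slideTimes f m a = {i, j}) :
    G.Adj (f 0 a) (f (i + 1) a) ∧ G.Adj (f (i + 1) a) (f m a) := by
  have hi : i ∈ slideTimes f m a := by simp [h]
  have hj : j ∈ slideTimes f m a := by simp [h]
  have hbefore : f i a = f 0 a :=
    eq_of_forall_notMem_slideTimes i.zero_le hi.1.le <| by
      simp only [h, Set.mem_insert_iff, Set.mem_singleton_iff]; lia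
  have hbetween : f j a = f (i + 1) a :=
    eq_of_forall_notMem_slideTimes hij hj.1.le <| by
      simp only [h, Set.mem_insert_iff, Set.mem_singleton_iff]; lia
  have hafter : f m a = f (j + 1) a :=
    eq_of_forall_notMem_slideTimes hj.1 le_rfl <| by
      simp only [h, Set.mem_insert_iff, Set.mem_singleton_iff]; lia
  rw [← hbefore, hafter, ← hbetween]
  exact ⟨hbetween ▸ hf.adj_of_mem_slideTimes hi, hf.adj_of_mem_slideTimes hj⟩

theorem IsTransformation.two_le_ncard_slideTimes (hf : IsTransformation G m f)
    (hne : f m a ≠ f 0 a) (hadj : ¬ G.Adj (f 0 a) (f m a)) : 2 ≤ (slideTimes f m a).ncard := by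
  have hzero : (slideTimes f m a).ncard ≠ 0 := fun h =>
    hne (eq_of_slideTimes_eq_empty ((Set.ncard_eq_zero finite_slideTimes).1 h))
  have hone : (slideTimes f m a).ncard ≠ 1 := fun h => by
    obtain ⟨i, hi⟩ := Set.ncard_eq_one.1 h
    exact hadj (hf.adj_of_slideTimes_eq_singleton hi)
  lia

theorem IsTransformation.ncard_slideTimes_eq_indicator [Finite α] (hf : IsTransformation G m f)
    {E : Set α} {d : ℕ} (hE : ∀ a ∈ E, d ≤ (slideTimes f m a).ncard) (hm : m ≤ d * E.ncard)
    (a : α) : (slideTimes f m a).ncard = E.indicator (fun _ => d) a := by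
  classical
  have := Fintype.ofFinite α
  have hle : ∀ b ∈ Finset.univ, E.indicator (fun _ => d) b ≤ (slideTimes f m b).ncard := by
    intro b _
    by_cases hb : b ∈ E
    · simpa [hb] using hE b hb
    · simp [hb]
  have hsum : ∑ b, E.indicator (fun _ => d) b = d * E.ncard := by
    rw [Finset.sum_indicator_eq_sum_filter, Finset.sum_const, smul_eq_mul, mul_comm,
      ← Set.ncard_coe_finset, Finset.coe_filter_univ]
    rfl
  have heq : ∑ b, E.indicator (fun _ => d) b = ∑ b, (slideTimes f m b).ncard :=
    (Finset.sum_le_sum hle).antisymm (hf.sum_ncard_slideTimes_le.trans (hsum ▸ hm))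
  exact ((Finset.sum_eq_sum_iff_of_le hle).1 heq a (Finset.mem_univ a)).symm

end SlideTimes

section Tight

variable {V : Type*} {G : SimpleGraph V} {S T : Set V} {m : ℕ} {f : ℕ → S → V}

/-- A transformation sequence from `S` to `T` in which every vertex of `T` outside `S` is at
distance at least two from `S` while the budget allows two slides per vertex of `S` that `T` misses.
The token `a : S` is the one that starts on the vertex `a`. -/
structure IsTightTransformation (G : SimpleGraph V) (S T : Set V) (m : ℕ) (f : ℕ → S → V) :
    Prop where
  isTransformation : IsTransformation G m f
  initial_eq : f 0 = Subtype.val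
  final_injective : Function.Injective (f m)
  range_final : Set.range (f m) = T
  not_adj : ∀ u ∈ S, ∀ v ∈ T \ S, ¬ G.Adj u v
  le_budget : m ≤ 2 * (S \ T).ncard

namespace IsTightTransformation

theorem final_mem (h : IsTightTransformation G S T m f) (a : S) : f m a ∈ T :=
  h.range_final ▸ Set.mem_range_self a

theorem final_eq (h : IsTightTransformation G S T m f) {a : S} (ha : slideTimes f m a = ∅) :
    f m a = a :=
  (eq_of_slideTimes_eq_empty ha).trans (congrFun h.initial_eq a)

theorem ncard_setOf_final_notMem [Finite S] (h : IsTightTransformation G S T m f) :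
    {a | f m a ∉ S}.ncard = (S \ T).ncard := by
  have hTfin : T.Finite := h.range_final ▸ Set.finite_range (f m)
  have hcard : S.ncard = T.ncard := by
    rw [← h.range_final, Set.ncard_range_of_injective h.final_injective, Nat.card_coe_set_eq]
  have hpre : {a | f m a ∉ S} = f m ⁻¹' (T \ S) := by
    ext a
    simp [h.final_mem a]
  rw [hpre, Set.ncard_preimage_of_injective_subset_range h.final_injective
    (h.range_final ▸ Set.sdiff_subset)]
  exact ((Set.ncard_eq_ncard_iff_ncard_sdiff_eq_ncard_sdiff S.toFinite hTfin).1 hcard).symm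

theorem ncard_slideTimes [Finite S] (h : IsTightTransformation G S T m f) (a : S) :
    (slideTimes f m a).ncard = {b | f m b ∉ S}.indicator (fun _ => 2) a := by
  refine h.isTransformation.ncard_slideTimes_eq_indicator (fun b hb => ?_)
    (h.ncard_setOf_final_notMem ▸ h.le_budget) a
  have hstart : f 0 b = b := congrFun h.initial_eq b
  refine h.isTransformation.two_le_ncard_slideTimes (fun heq => hb ?_) ?_
  · exact heq ▸ hstart ▸ b.2
  · exact hstart ▸ h.not_adj b b.2 _ ⟨h.final_mem b, hb⟩

theorem slideTimes_eq_empty_iff_final_mem [Finite S] (h : IsTightTransformation G S T m f)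
    {a : S} : slideTimes f m a = ∅ ↔ f m a ∈ S := by
  rw [← Set.ncard_eq_zero finite_slideTimes, h.ncard_slideTimes]
  by_cases ha : f m a ∈ S <;> simp [ha]

theorem slideTimes_eq_empty_iff [Finite S] (h : IsTightTransformation G S T m f) {a : S} :
    slideTimes f m a = ∅ ↔ (a : V) ∈ T := by
  refine ⟨fun ha => h.final_eq ha ▸ h.final_mem a, fun ha => ?_⟩
  obtain ⟨b, hb⟩ : ∃ b, f m b = a := by rwa [← h.range_final] at ha
  have hb_stay : slideTimes f m b = ∅ := h.slideTimes_eq_empty_iff_final_mem.2 (hb ▸ a.2)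
  obtain rfl : b = a := Subtype.ext ((h.final_eq hb_stay).symm.trans hb)
  exact hb_stay

theorem exists_slideTimes_eq_pair [Finite S] (h : IsTightTransformation G S T m f) {a : S}
    (ha : (slideTimes f m a).Nonempty) :
    ∃ i j, i < j ∧ slideTimes f m a = {i, j} ∧ G.Adj a (f (i + 1) a) ∧
      G.Adj (f (i + 1) a) (f m a) ∧ f m a ∈ T \ S := by
  have hfinal : f m a ∉ S := mt h.slideTimes_eq_empty_iff_final_mem.2 ha.ne_empty
  have htwo : (slideTimes f m a).ncard = 2 := by simp [h.ncard_slideTimes, hfinal]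
  obtain ⟨i, j, hij, heq⟩ : ∃ i j, i < j ∧ slideTimes f m a = {i, j} := by
    obtain ⟨i, j, hne, heq⟩ := Set.ncard_eq_two.1 htwo
    rcases hne.lt_or_gt with hij | hji
    · exact ⟨i, j, hij, heq⟩
    · exact ⟨j, i, hji, heq.trans (Set.pair_comm i j)⟩
  obtain ⟨hfirst, hsecond⟩ := h.isTransformation.adj_adj_of_slideTimes_eq_pair hij heq
  rw [h.initial_eq] at hfirst
  exact ⟨i, j, hij, heq, hfirst, hsecond, h.final_mem a, hfinal⟩

end IsTightTransformation

end Tight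

end TokenDiscovery

namespace StarsConstruction

variable {κ n : ℕ}

theorem exists_connFor_eq_conn (i j : Fin κ) (k : Bool) :
    ∃ c d s, (connFor i j k : PreNode κ n) = PreNode.conn c d s k := by
  unfold connFor
  split_ifs
  exacts [⟨_, _, _, rfl⟩, ⟨_, _, _, rfl⟩]

theorem vleaf_ne_connFor (i : Fin κ) (x : Fin n) (j : Fin κ) (p : Fin n) (c d : Fin κ) (k : Bool) :
    PreNode.vleaf i x j p ≠ connFor c d k := by
  obtain ⟨_, _, _, h⟩ := exists_connFor_eq_conn (n := n) c d k
  simp [h]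

theorem eleaf_ne_connFor (i j : Fin κ) (x y : Fin n) (s : Bool) (p : Fin n) (c d : Fin κ)
    (k : Bool) : PreNode.eleaf i j x y s p ≠ connFor c d k := by
  obtain ⟨_, _, _, h⟩ := exists_connFor_eq_conn (n := n) c d k
  simp [h]

variable (G : SimpleGraph (Fin κ × Fin n))

/-- All leaves of all star edge-gadgets. -/
def edgeLeaves : Set (Node G) := {w | ∃ i j x y s p, w.1 = PreNode.eleaf i j x y s p}

/-- The green connector nodes. -/
def connectors : Set (Node G) := {w | ∃ c d s k, w.1 = PreNode.conn c d s k}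

variable {G}

theorem mem_connectors_of_eq_connFor {v : Node G} {i j : Fin κ} {k : Bool}
    (hv : v.1 = connFor i j k) : v ∈ connectors G := by
  obtain ⟨c, d, s, h⟩ := exists_connFor_eq_conn (n := n) i j k
  exact ⟨c, d, s, k, hv.trans h⟩

theorem eq_vroot_or_mem_connectors_of_adj {u v : Node G} (hu : u ∈ initialS G)
    (h : (H G).Adj u v) : (∃ i x, v.1 = PreNode.vroot i x) ∨ v ∈ connectors G := by
  obtain ⟨i, x, j, p, hu⟩ := hu
  have hrel := ((SimpleGraph.fromRel_adj _ _ _).1 h).2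
  simp only [hu, Rel, vleaf_ne_connFor, reduceCtorEq, PreNode.vleaf.injEq, false_and, and_false,
    exists_false, false_or, or_false] at hrel
  rcases hrel with ⟨i', x', -, -, -, hv⟩ | ⟨_, _, _, _, -, -, hv⟩ | ⟨_, _, _, _, -, -, hv⟩
  · exact .inl ⟨i', x', hv⟩
  all_goals exact .inr (mem_connectors_of_eq_connFor hv)

theorem eq_eroot_or_mem_connectors_of_adj {v w : Node G} (hw : w ∈ edgeLeaves G)
    (h : (H G).Adj v w) : (∃ i j x y, v.1 = PreNode.eroot i j x y) ∨ v ∈ connectors G := by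
  obtain ⟨i, j, x, y, s, p, hw⟩ := hw
  have hrel := ((SimpleGraph.fromRel_adj _ _ _).1 h).2
  simp only [hw, Rel, eleaf_ne_connFor, reduceCtorEq, PreNode.eleaf.injEq, false_and, and_false,
    exists_false, false_or, or_false] at hrel
  rcases hrel with ⟨i', j', x', y', -, -, -, hv⟩ | ⟨_, _, _, _, _, -, -, hv⟩ |
    ⟨_, _, _, _, _, -, -, hv⟩ | ⟨_, _, _, _, _, -, -, hv⟩ | ⟨_, _, _, _, _, -, -, hv⟩
  · exact .inl ⟨i', j', x', y', hv⟩
  all_goals exact .inr (mem_connectors_of_eq_connFor hv)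

theorem not_adj_of_mem_initialS_of_mem_edgeLeaves {u w : Node G} (hu : u ∈ initialS G)
    (hw : w ∈ edgeLeaves G) : ¬ (H G).Adj u w := by
  intro h
  obtain ⟨i, j, x, y, s, p, hw⟩ := hw
  rcases eq_vroot_or_mem_connectors_of_adj hu h with ⟨_, _, hw'⟩ | ⟨_, _, _, _, hw'⟩ <;>
    simp [hw] at hw'

theorem mem_connectors_of_adj_of_adj {u v w : Node G} (hu : u ∈ initialS G)
    (hw : w ∈ edgeLeaves G) (huv : (H G).Adj u v) (hvw : (H G).Adj v w) : v ∈ connectors G := by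
  rcases eq_vroot_or_mem_connectors_of_adj hu huv with ⟨i, x, hv⟩ | hv
  · rcases eq_eroot_or_mem_connectors_of_adj hw hvw with ⟨_, _, _, _, hv'⟩ | hv'
    · simp [hv] at hv'
    · exact hv'
  · exact hv

theorem eq_of_mem_vertexGadgetLeaves {i i' : Fin κ} {x x' : Fin n} {w : Node G}
    (hw : w ∈ vertexGadgetLeaves G i x) (hw' : w ∈ vertexGadgetLeaves G i' x') :
    i = i' ∧ x = x' := by
  obtain ⟨j, p, hw⟩ := hw
  obtain ⟨j', p', hw'⟩ := hw'
  simp only [hw, PreNode.vleaf.injEq] at hw'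
  exact ⟨hw'.1, hw'.2.1⟩

variable (G)

theorem initialS_eq_iUnion : initialS G = ⋃ i, ⋃ x, vertexGadgetLeaves G i x := by
  ext w
  simp only [initialS, vertexGadgetLeaves, Set.mem_iUnion, Set.mem_ofPred_eq]

/-- The leaves of the star vertex-gadget for `(i, x)`, indexed by their class and their position in
the group for that class. -/
def vertexLeaf (i : Fin κ) (x : Fin n) (q : {j : Fin κ // j ≠ i} × Fin n) : Node G :=
  ⟨PreNode.vleaf i x q.1 q.2, q.1.2⟩

theorem vertexLeaf_injective (i : Fin κ) (x : Fin n) :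
    Function.Injective (vertexLeaf G i x) := by
  rintro ⟨⟨j, hj⟩, p⟩ ⟨⟨j', hj'⟩, p'⟩ h
  simpa [vertexLeaf, Subtype.ext_iff] using h

theorem range_vertexLeaf (i : Fin κ) (x : Fin n) :
    Set.range (vertexLeaf G i x) = vertexGadgetLeaves G i x := by
  ext ⟨w, hw⟩
  constructor
  · rintro ⟨q, hq⟩
    exact ⟨q.1, q.2, (congrArg Subtype.val hq).symm⟩
  · rintro ⟨j, p, rfl⟩
    exact ⟨(⟨j, hw⟩, p), rfl⟩

theorem finite_vertexGadgetLeaves (i : Fin κ) (x : Fin n) : (vertexGadgetLeaves G i x).Finite :=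
  range_vertexLeaf G i x ▸ Set.finite_range _

theorem ncard_vertexGadgetLeaves (i : Fin κ) (x : Fin n) :
    (vertexGadgetLeaves G i x).ncard = n * (κ - 1) := by
  rw [← range_vertexLeaf, Set.ncard_range_of_injective (vertexLeaf_injective G i x)]
  simp [Fintype.card_subtype_compl, mul_comm]

theorem vertexGadgetLeaves_subset_initialS (i : Fin κ) (x : Fin n) :
    vertexGadgetLeaves G i x ⊆ initialS G := fun _ ⟨j, p, hw⟩ => ⟨i, x, j, p, hw⟩

theorem ncard_preimage_vertexGadgetLeaves (i : Fin κ) (x : Fin n) :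
    ((↑) ⁻¹' vertexGadgetLeaves G i x : Set (initialS G)).ncard = n * (κ - 1) := by
  rw [Set.ncard_preimage_of_injective_subset_range Subtype.val_injective
    (Subtype.range_val ▸ vertexGadgetLeaves_subset_initialS G i x), ncard_vertexGadgetLeaves]

instance finite_initialS : Finite (initialS G) := by
  rw [initialS_eq_iUnion]
  exact Set.finite_iUnion fun i => Set.finite_iUnion fun x => finite_vertexGadgetLeaves G i x

variable {G} {T : Set (Node G)}

theorem initialS_sdiff_eq_iUnion {x : Fin κ → Fin n}
    (hempty : ∀ i, vertexGadgetLeaves G i (x i) ∩ T = ∅)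
    (hfull : ∀ i, ∀ x' : Fin n, x' ≠ x i → vertexGadgetLeaves G i x' ⊆ T) :
    initialS G \ T = ⋃ i, vertexGadgetLeaves G i (x i) := by
  ext w
  simp only [initialS_eq_iUnion, Set.mem_sdiff, Set.mem_iUnion]
  constructor
  · rintro ⟨⟨i, x', hw⟩, hwT⟩
    obtain rfl : x' = x i := by_contra fun hne => hwT (hfull i x' hne hw)
    exact ⟨i, hw⟩
  · rintro ⟨i, hw⟩
    exact ⟨⟨i, x i, hw⟩, fun hwT => (hempty i).subset ⟨hw, hwT⟩⟩

theorem IsStarsSolution.ncard_initialS_sdiff (hT : IsStarsSolution G T) :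
    (initialS G \ T).ncard = n * (κ - 1) * κ := by
  obtain ⟨-, -, hS2, -⟩ := hT
  choose x hempty hfull using hS2
  rw [initialS_sdiff_eq_iUnion hempty hfull, Set.ncard_iUnion_of_finite
    (fun i => finite_vertexGadgetLeaves G i (x i)) fun i i' hne => Set.disjoint_left.2
      fun w hw hw' => hne (eq_of_mem_vertexGadgetLeaves hw hw').1]
  simp [ncard_vertexGadgetLeaves, finsum_eq_sum_of_fintype, mul_comm]

theorem IsStarsSolution.sdiff_initialS_subset (hT : IsStarsSolution G T) :
    T \ initialS G ⊆ edgeLeaves G :=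
  fun w hw => (hT.2.1 w hw.1).resolve_left hw.2

theorem IsStarsSolution.isTightTransformation (hT : IsStarsSolution G T) {m : ℕ}
    {f : ℕ → initialS G → Node G} (hm : m ≤ 2 * n * (κ - 1) * κ) (h0 : f 0 = Subtype.val)
    (hf : TokenDiscovery.IsTransformation (H G) m f) (hinj : Function.Injective (f m))
    (hrange : Set.range (f m) = T) :
    TokenDiscovery.IsTightTransformation (H G) (initialS G) T m f where
  isTransformation := hf
  initial_eq := h0
  final_injective := hinj
  range_final := hrange
  not_adj u hu v hv :=
    not_adj_of_mem_initialS_of_mem_edgeLeaves hu (hT.sdiff_initialS_subset hv)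
  le_budget := by
    rw [hT.ncard_initialS_sdiff]
    exact hm.trans_eq (by ring)

end StarsConstruction

open StarsConstruction in
/-- Properties of any transformation sequence of at most `2n(κ−1)κ` token
slides moving the initial configuration to a stars solution `T`:
(i) every token that moves performs exactly two token slides and its
intermediate vertex is a green connector node; (ii) for each edge-block, `T`
contains all `2n` leaves of exactly one edge-gadget of that block; (iii) for
each vertex-block, exactly `n(κ−1)` tokens slide, all coming from exactly one
vertex-gadget of that block. -/
theorem stars_solution_sequence_structure {κ n : ℕ} (G : SimpleGraph (Fin κ × Fin n))
    (T : Set (Node G)) (hT : IsStarsSolution G T)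
    (m : ℕ) (f : ℕ → ↥(initialS G) → Node G)
    (hm : m ≤ 2 * n * (κ - 1) * κ)
    (h0 : f 0 = fun a => Subtype.val a)
    (hstep : ∀ i : ℕ, i < m → TokenDiscovery.Step (H G) (f i) (f (i + 1)))
    (hinj : Function.Injective (f m)) (hrange : Set.range (f m) = T) :
    -- (i)
    (∀ a : ↥(initialS G), ({i : ℕ | i < m ∧ f (i + 1) a ≠ f i a}).Nonempty →
        ∃ i₁ i₂ : ℕ, i₁ < i₂ ∧ {i : ℕ | i < m ∧ f (i + 1) a ≠ f i a} = {i₁, i₂} ∧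
          ∃ c d s k, (f (i₁ + 1) a).1 = PreNode.conn c d s k) ∧
    -- (ii)
    (∀ i j : Fin κ, i < j → ∃ x y : Fin n, G.Adj (i, x) (j, y) ∧
        edgeGadgetLeaves G i j x y ⊆ T ∧
        ∀ x' y' : Fin n, G.Adj (i, x') (j, y') → (x', y') ≠ (x, y) →
          edgeGadgetLeaves G i j x' y' ∩ T = ∅) ∧
    -- (iii)
    (∀ i : Fin κ, ∃ x : Fin n,
        (∀ a : ↥(initialS G), (∃ j p, (a : Node G).1 = PreNode.vleaf i x j p) →
            ∃ s : ℕ, s < m ∧ f (s + 1) a ≠ f s a) ∧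
        (∀ a : ↥(initialS G), ∀ x' : Fin n, x' ≠ x →
            (∃ j p, (a : Node G).1 = PreNode.vleaf i x' j p) →
            ∀ s : ℕ, s < m → f (s + 1) a = f s a) ∧
        {a : ↥(initialS G) | (∃ j p, (a : Node G).1 = PreNode.vleaf i x j p) ∧
            ∃ s : ℕ, s < m ∧ f (s + 1) a ≠ f s a}.ncard = n * (κ - 1)) := by
  have h := hT.isTightTransformation hm h0 hstep hinj hrange
  refine ⟨fun a ha => ?_, hT.2.2.2, fun i => ?_⟩
  · obtain ⟨i₁, i₂, hlt, heq, hfirst, hsecond, hfinal⟩ := h.exists_slideTimes_eq_pair ha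
    exact ⟨i₁, i₂, hlt, heq,
      mem_connectors_of_adj_of_adj a.2 (hT.sdiff_initialS_subset hfinal) hfirst hsecond⟩
  · obtain ⟨x, hempty, hfull⟩ := hT.2.2.1 i
    have hslide (a : initialS G) (ha : a.1 ∈ vertexGadgetLeaves G i x) :
        (TokenDiscovery.slideTimes f m a).Nonempty :=
      Set.nonempty_iff_ne_empty.2 fun hstay =>
        hempty.subset ⟨ha, h.slideTimes_eq_empty_iff.1 hstay⟩
    refine ⟨x, hslide, fun a x' hne ha s hs => ?_, ?_⟩
    · have hstay := h.slideTimes_eq_empty_iff.2 (hfull x' hne ha)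
      exact by_contra fun hmove => hstay.subset ⟨hs, hmove⟩
    · rw [← ncard_preimage_vertexGadgetLeaves G i x]
      exact congrArg Set.ncard (Set.ext fun a => and_iff_left_of_imp (hslide a))
end

section
/- If in the graph H of the stars construction some stars solution T is reachable from the initial configuration S within the budget b = 2n(κ−1)κ token slides in the discovery token sliding model, then the Multicolored Clique instance (G, κ) is a yes-instance. -/
/-!
Every leaf is adjacent only to its root and to one connector, so moving a token from a leaf to a
different leaf takes at least two slides. The `κ` emptied vertex-gadgets hold `n(κ − 1)κ` tokens,
all of which have to leave their gadget; hence a budget of `2n(κ − 1)κ` is exactly used up: each of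
these tokens takes two slides and no other token moves. The remaining vertex-gadget leaves thus stay
occupied, so the tokens that move end on edge-gadget leaves, which two slides reach only through a
shared connector. Hence the `n` tokens of the group for class `j` in the emptied gadget of class `i`
fill the group for class `i` of the edge-gadget selected for `{i, j}`, and index tokens go to index
leaves. Counting the index leaves on both sides shows that the selected edge ends at the emptied
vertex, so the emptied vertices form a clique.
-/

namespace TokenDiscovery

variable {V α : Type*} [Fintype α] {K : SimpleGraph V}

theorem exists_walks_of_steps {f : ℕ → α → V} {m : ℕ}
    (hstep : ∀ i < m, Step K (f i) (f (i + 1))) :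
    ∃ w : ∀ a, K.Walk (f 0 a) (f m a), ∑ a, (w a).length = m := by
  classical
  induction m with
  | zero => exact ⟨fun _ => .nil, by simp⟩
  | succ m ih =>
    obtain ⟨w, hw⟩ := ih fun i hi => hstep i (hi.trans m.lt_succ_self)
    obtain ⟨moved, hadj, hrest⟩ := hstep m m.lt_succ_self
    have extend (a : α) : ∃ p : K.Walk (f 0 a) (f (m + 1) a),
        p.length = (w a).length + if a = moved then 1 else 0 := by
      by_cases ha : a = moved
      · subst ha
        exact ⟨(w a).concat hadj, by simp⟩
      · exact ⟨(w a).copy rfl (hrest a ha).symm, by simp [ha]⟩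
    choose w' hw' using extend
    exact ⟨w', by simp [hw', Finset.sum_add_distrib, hw]⟩

theorem Reachable.exists_walks {c₀ : α → V} {T : Set V} {b : ℕ} (h : Reachable K c₀ T b) :
    ∃ g : α → V, Function.Injective g ∧ Set.range g = T ∧
      ∃ w : ∀ a, K.Walk (c₀ a) (g a), ∑ a, (w a).length ≤ b := by
  obtain ⟨m, f, hm, rfl, hstep, hinj, hrange⟩ := h
  obtain ⟨w, hw⟩ := exists_walks_of_steps hstep
  exact ⟨f m, hinj, hrange, w, hw.trans_le hm⟩

end TokenDiscovery

namespace StarsConstruction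

theorem eq_and_eq_zero_of_sum_le_card_nsmul {ι α M : Type*} [Fintype ι] [Fintype α]
    [AddCommMonoid M] [PartialOrder M] [IsOrderedCancelAddMonoid M] [CanonicallyOrderedAdd M]
    {l : α → M} {c : M} (d : ι ↪ α) (hc : ∀ t, c ≤ l (d t))
    (hsum : ∑ a, l a ≤ Fintype.card ι • c) :
    (∀ t, l (d t) = c) ∧ ∀ a ∉ Set.range d, l a = 0 := by
  classical
  let lower (a : α) : M := if a ∈ Set.range d then c else 0
  have lower_le : ∀ a ∈ Finset.univ, lower a ≤ l a := by
    intro a _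
    by_cases ha : a ∈ Set.range d
    · obtain ⟨t, rfl⟩ := ha
      simpa [lower] using hc t
    · simp only [lower, if_neg ha, zero_le]
  have sum_lower : ∑ a, lower a = Fintype.card ι • c := by
    simp [lower, ← Finset.sum_filter, Finset.card_image_of_injective _ d.injective]
  have lower_eq : ∀ a ∈ Finset.univ, lower a = l a :=
    (Finset.sum_eq_sum_iff_of_le lower_le).mp
      ((Finset.sum_le_sum lower_le).antisymm (hsum.trans_eq sum_lower.symm))
  exact ⟨fun t => (lower_eq _ (Finset.mem_univ _)).symm.trans (if_pos ⟨t, rfl⟩),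
    fun a ha => (lower_eq a (Finset.mem_univ _)).symm.trans (if_neg ha)⟩

theorem eq_of_injective_of_forall_le_iff {α : Type*} [LinearOrder α] [Finite α] {e : α → α}
    (he : Function.Injective e) {x y : α} (h : ∀ p, p ≤ x ↔ e p ≤ y) : x = y := by
  have hcard : (Set.Iic x).ncard = (Set.Iic y).ncard := by
    have himage : e '' Set.Iic x = Set.Iic y := by
      rw [show Set.Iic x = e ⁻¹' Set.Iic y from Set.ext h,
        Set.image_preimage_eq _ (Finite.surjective_of_injective he)]
    rw [← himage, Set.ncard_image_of_injective _ he]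
  rcases lt_trichotomy x y with hlt | heq | hlt
  · exact absurd hcard (Set.ncard_lt_ncard (Set.Iic_ssubset_Iic.mpr hlt)).ne
  · exact heq
  · exact absurd hcard (Set.ncard_lt_ncard (Set.Iic_ssubset_Iic.mpr hlt)).ne'

variable {κ n : ℕ}

/-- A leaf of a star vertex-gadget or of a star edge-gadget, as in condition (S1). -/
def IsLeaf (w : PreNode κ n) : Prop :=
  (∃ i x j p, w = .vleaf i x j p) ∨ ∃ i j x y s p, w = .eleaf i j x y s p

/-- The `p`-th leaf of the group for `(i, x)` in the star edge-gadget for the edge `(i,x)(j,y)`.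
Unlike in `PreNode.eleaf`, the classes `i` and `j` may come in either order, which puts the groups
for the two ends of the edge on the same footing, as `connFor` does for connectors. -/
def edgeLeaf (i j : Fin κ) (x y p : Fin n) : PreNode κ n :=
  if i < j then .eleaf i j x y false p else .eleaf j i y x true p

theorem edgeLeaf_of_lt {i j : Fin κ} (hij : i < j) (x y p : Fin n) :
    edgeLeaf i j x y p = .eleaf i j x y false p := if_pos hij

theorem edgeLeaf_of_gt {i j : Fin κ} (hij : j < i) (x y p : Fin n) :
    edgeLeaf i j x y p = .eleaf j i y x true p := if_neg hij.not_gt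

theorem exists_eleaf_eq_edgeLeaf {i j : Fin κ} (hij : i < j) (x y : Fin n) (s : Bool) (p : Fin n) :
    ∃ i' j' x' y', PreNode.eleaf i j x y s p = edgeLeaf i' j' x' y' p := by
  cases s with
  | false => exact ⟨i, j, x, y, (edgeLeaf_of_lt hij x y p).symm⟩
  | true => exact ⟨j, i, y, x, (edgeLeaf_of_gt hij y x p).symm⟩

theorem not_isLeaf_connFor (i j : Fin κ) (b : Bool) :
    ¬ IsLeaf (connFor i j b : PreNode κ n) := by
  unfold connFor IsLeaf
  split_ifs <;> simp

theorem connFor_ne_vroot (i j i' : Fin κ) (x : Fin n) (b : Bool) :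
    connFor i j b ≠ .vroot i' x := by
  unfold connFor
  split_ifs <;> simp

theorem connFor_ne_eroot (i j i' j' : Fin κ) (x y : Fin n) (b : Bool) :
    connFor i j b ≠ .eroot i' j' x y := by
  unfold connFor
  split_ifs <;> simp

theorem connFor_inj {i j i' j' : Fin κ} {b b' : Bool} :
    (connFor i j b : PreNode κ n) = connFor i' j' b' ↔ i = i' ∧ j = j' ∧ b = b' := by
  unfold connFor
  split_ifs <;> grind

section Adjacency

theorem not_isLeaf_of_rel {a b : PreNode κ n} (h : Rel a b) : ¬ IsLeaf b := by
  rcases h with ⟨_, _, _, rfl⟩ | ⟨_, _, _, _, _, rfl⟩ | ⟨_, _, _, _, _, _, rfl⟩ |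
    ⟨_, _, _, _, _, _, rfl⟩ | ⟨_, _, _, _, _, rfl⟩ | ⟨_, _, _, _, _, _, _, rfl⟩ |
    ⟨_, _, _, _, _, _, _, rfl⟩ | ⟨_, _, _, _, _, _, _, rfl⟩ |
    ⟨_, _, _, _, _, _, _, rfl⟩ | ⟨_, _, _, _, _, _, _, rfl⟩
  all_goals first
    | exact not_isLeaf_connFor _ _ _
    | simp [IsLeaf]

theorem rel_vleaf {i j : Fin κ} {x p : Fin n} {b : PreNode κ n} (h : Rel (.vleaf i x j p) b) :
    b = .vroot i x ∨ b = connFor i j (decide (p ≤ x)) := by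
  simp only [Rel, PreNode.vleaf.injEq, reduceCtorEq, false_and, and_false, exists_false, false_or,
    or_false, Fin.val_fin_le, Fin.val_fin_lt] at h
  grind

theorem rel_edgeLeaf {i j : Fin κ} {x y p : Fin n} {b : PreNode κ n}
    (h : Rel (edgeLeaf i j x y p) b) :
    (∃ i' j' x' y', b = .eroot i' j' x' y') ∨ b = connFor i j (decide (p ≤ x)) := by
  unfold edgeLeaf at h
  split_ifs at h <;>
    simp only [Rel, PreNode.eleaf.injEq, reduceCtorEq, false_and, and_false, exists_false, false_or,
      or_false, Fin.val_fin_le, Fin.val_fin_lt] at h <;>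
    grind

theorem eq_and_le_iff_of_rel_common {i j i' j' : Fin κ} {x p x' y' q : Fin n} {b : PreNode κ n}
    (hv : Rel (.vleaf i x j p) b) (he : Rel (edgeLeaf i' j' x' y' q) b) :
    i = i' ∧ j = j' ∧ (p ≤ x ↔ q ≤ x') := by
  rcases rel_vleaf hv with rfl | rfl <;>
    rcases rel_edgeLeaf he with ⟨_, _, _, _, hroot⟩ | hconn
  · simp at hroot
  · exact (connFor_ne_vroot _ _ _ _ _ hconn.symm).elim
  · exact (connFor_ne_eroot _ _ _ _ _ _ _ hroot).elim
  · simpa [connFor_inj] using hconn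

variable {G : SimpleGraph (Fin κ × Fin n)}

theorem rel_of_adj_of_isLeaf {a b : Node G} (h : (H G).Adj a b) (ha : IsLeaf a.1) :
    Rel a.1 b.1 :=
  ((SimpleGraph.fromRel_adj _ _ _).mp h).2.resolve_right fun hba => not_isLeaf_of_rel hba ha

theorem two_le_length_of_isLeaf {a b : Node G} (w : (H G).Walk a b) (ha : IsLeaf a.1)
    (hb : IsLeaf b.1) (hab : a ≠ b) : 2 ≤ w.length := by
  have hzero : w.length ≠ 0 := fun h => hab (SimpleGraph.Walk.eq_of_length_eq_zero h)
  have hone : w.length ≠ 1 := fun h =>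
    not_isLeaf_of_rel (rel_of_adj_of_isLeaf (SimpleGraph.Walk.adj_of_length_eq_one h) ha) hb
  lia

theorem exists_edgeLeaf_of_length_eq_two {a b : Node G} {i j : Fin κ} {x p : Fin n}
    (ha : a.1 = .vleaf i x j p) (hb : ∃ i' j' x' y' s q, b.1 = .eleaf i' j' x' y' s q)
    (w : (H G).Walk a b) (hw : w.length = 2) :
    ∃ x' y' q, b.1 = edgeLeaf i j x' y' q ∧ (p ≤ x ↔ q ≤ x') := by
  obtain ⟨c, hac, hbc⟩ := SimpleGraph.walkLengthTwoEquivCommonNeighbors _ a b ⟨w, hw⟩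
  have hrel_a : Rel a.1 c.1 := rel_of_adj_of_isLeaf hac (.inl ⟨_, _, _, _, ha⟩)
  have hrel_b : Rel b.1 c.1 := rel_of_adj_of_isLeaf hbc (.inr hb)
  obtain ⟨i', j', x', y', s, q, hb⟩ := hb
  have hlt : i' < j' := (hb ▸ b.2 : Valid G (.eleaf i' j' x' y' s q)).1
  obtain ⟨i', j', x', y', hedge⟩ := exists_eleaf_eq_edgeLeaf hlt x' y' s q
  rw [ha] at hrel_a
  rw [hb, hedge] at hrel_b
  obtain ⟨rfl, rfl, hiff⟩ := eq_and_le_iff_of_rel_common hrel_a hrel_b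
  exact ⟨x', y', q, hb.trans hedge, hiff⟩

end Adjacency

section Tokens

variable (G : SimpleGraph (Fin κ × Fin n))

instance : Finite (initialS G) := by
  have hrange : (Set.range fun t : Fin κ × Fin n × Fin κ × Fin n =>
      PreNode.vleaf t.1 t.2.1 t.2.2.1 t.2.2.2).Finite := Set.finite_range _
  refine ((hrange.preimage Subtype.val_injective.injOn).subset ?_).to_subtype
  rintro _ ⟨i, x, j, p, hw⟩
  exact ⟨(i, x, j, p), hw.symm⟩

noncomputable instance : Fintype (initialS G) := .ofFinite _

/-- The tokens that start in the gadgets of the vertices `(i, v i)`, where the token indexed by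
`⟨i, j, p⟩` starts on the `p`-th leaf of the group for class `j`. -/
def gadgetToken (v : Fin κ → Fin n) : ((i : Fin κ) × {j // j ≠ i} × Fin n) ↪ initialS G where
  toFun t := ⟨⟨.vleaf t.1 (v t.1) t.2.1 t.2.2, t.2.1.2⟩, _, _, _, _, rfl⟩
  inj' := by
    rintro ⟨i, ⟨j, _⟩, p⟩ ⟨i', ⟨j', _⟩, p'⟩ h
    obtain ⟨rfl, -, rfl, rfl⟩ := PreNode.vleaf.inj (congrArg (·.1.1) h)
    rfl

theorem card_gadgetToken_index (κ n : ℕ) :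
    Fintype.card ((i : Fin κ) × {j // j ≠ i} × Fin n) = n * (κ - 1) * κ := by
  simp [mul_comm]

variable {G} {v : Fin κ → Fin n} {g : initialS G → Node G}

theorem length_eq_of_sum_length_le (hleaf : ∀ a, IsLeaf (g a).1)
    (havoid : ∀ i a, g a ∉ vertexGadgetLeaves G i (v i)) (w : ∀ a, (H G).Walk a.1 (g a))
    (hw : ∑ a, (w a).length ≤ 2 * n * (κ - 1) * κ) :
    (∀ t, (w (gadgetToken G v t)).length = 2) ∧
      ∀ a ∉ Set.range (gadgetToken G v), (w a).length = 0 := by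
  refine eq_and_eq_zero_of_sum_le_card_nsmul (l := fun a => (w a).length) (gadgetToken G v)
    (fun t => ?_) ?_
  · refine two_le_length_of_isLeaf _ (.inl (gadgetToken G v t).2) (hleaf _) fun hstay => ?_
    exact havoid t.1 (gadgetToken G v t) (hstay ▸ ⟨_, _, rfl⟩)
  · calc ∑ a, (w a).length ≤ 2 * n * (κ - 1) * κ := hw
      _ = (n * (κ - 1) * κ) * 2 := by ring
      _ = _ := by rw [card_gadgetToken_index, smul_eq_mul]

theorem exists_eleaf_of_forall_notMem_range (hinj : Function.Injective g)
    (hleaf : ∀ a, IsLeaf (g a).1) (havoid : ∀ i a, g a ∉ vertexGadgetLeaves G i (v i))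
    (hstay : ∀ a ∉ Set.range (gadgetToken G v), g a = a)
    (t : (i : Fin κ) × {j // j ≠ i} × Fin n) :
    ∃ i j x y s p, (g (gadgetToken G v t)).1 = .eleaf i j x y s p := by
  refine (hleaf _).resolve_left fun hvleaf => ?_
  let resident : initialS G := ⟨g (gadgetToken G v t), hvleaf⟩
  have hresident : resident ∉ Set.range (gadgetToken G v) := fun ⟨t', ht'⟩ =>
    havoid t'.1 (gadgetToken G v t) ⟨_, _, congrArg (·.1.1) ht'.symm⟩
  exact hresident ⟨t, (hinj (hstay resident hresident)).symm⟩

theorem exists_edgeLeaf_of_sum_length_le (hinj : Function.Injective g)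
    (hleaf : ∀ a, IsLeaf (g a).1) (havoid : ∀ i a, g a ∉ vertexGadgetLeaves G i (v i))
    (w : ∀ a, (H G).Walk a.1 (g a)) (hw : ∑ a, (w a).length ≤ 2 * n * (κ - 1) * κ)
    (i : Fin κ) (j : {j // j ≠ i}) (p : Fin n) :
    ∃ x y q, (g (gadgetToken G v ⟨i, j, p⟩)).1 = edgeLeaf i j x y q ∧ (p ≤ v i ↔ q ≤ x) := by
  obtain ⟨htwo, hzero⟩ := length_eq_of_sum_length_le hleaf havoid w hw
  have hstay (a) (ha : a ∉ Set.range (gadgetToken G v)) : g a = a :=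
    (SimpleGraph.Walk.eq_of_length_eq_zero (hzero a ha)).symm
  exact exists_edgeLeaf_of_length_eq_two rfl
    (exists_eleaf_of_forall_notMem_range hinj hleaf havoid hstay _) _ (htwo _)

theorem eq_of_forall_edgeLeaf (hinj : Function.Injective g) {i : Fin κ} {j : {j // j ≠ i}}
    {x y : Fin n}
    (hend : ∀ p, ∃ x y q,
      (g (gadgetToken G v ⟨i, j, p⟩)).1 = edgeLeaf i j x y q ∧ (p ≤ v i ↔ q ≤ x))
    (hsel : ∀ a x' y' q, (g a).1 = edgeLeaf i j x' y' q → x' = x ∧ y' = y) : v i = x := by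
  have hpos (p : Fin n) : ∃ q,
      (g (gadgetToken G v ⟨i, j, p⟩)).1 = edgeLeaf i j x y q ∧ (p ≤ v i ↔ q ≤ x) := by
    obtain ⟨x', y', q, hq, hiff⟩ := hend p
    obtain ⟨rfl, rfl⟩ := hsel _ _ _ _ hq
    exact ⟨q, hq, hiff⟩
  choose pos hpos hiff using hpos
  refine eq_of_injective_of_forall_le_iff (e := pos) (fun p p' hpp' => ?_) hiff
  have hsame : g (gadgetToken G v ⟨i, j, p⟩) = g (gadgetToken G v ⟨i, j, p'⟩) :=
    Subtype.ext (by rw [hpos, hpos, hpp'])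
  simpa using (gadgetToken G v).injective (hinj hsame)

end Tokens

theorem eq_of_mem_of_eq_eleaf {G : SimpleGraph (Fin κ × Fin n)} {T : Set (Node G)} {b : Node G}
    {i j : Fin κ} {x y x' y' p : Fin n} {s : Bool}
    (hempty : ∀ x' y' : Fin n, G.Adj (i, x') (j, y') → (x', y') ≠ (x, y) →
      edgeGadgetLeaves G i j x' y' ∩ T = ∅)
    (hbT : b ∈ T) (hb : b.1 = .eleaf i j x' y' s p) : x' = x ∧ y' = y := by
  have hadj : G.Adj (i, x') (j, y') := (hb ▸ b.2 : Valid G (.eleaf i j x' y' s p)).2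
  by_contra hne
  have hmem : b ∈ edgeGadgetLeaves G i j x' y' ∩ T := ⟨⟨s, p, hb⟩, hbT⟩
  rw [hempty x' y' hadj fun h => hne (Prod.mk.inj h)] at hmem
  exact hmem

theorem mccYes_of_forall_lt {G : SimpleGraph (Fin κ × Fin n)} (v : Fin κ → Fin n)
    (h : ∀ i j, i < j → G.Adj (i, v i) (j, v j)) : MCCYes G :=
  ⟨v, fun i j hij => hij.lt_or_gt.elim (h i j) fun hji => (h j i hji).symm⟩

end StarsConstruction

open StarsConstruction in
/-- If in the graph of the stars construction some stars solution is reachable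
from the initial configuration within `2n(κ−1)κ` token slides in the discovery
token sliding model, then the Multicolored Clique instance is a yes-instance. -/
theorem mcc_yes_of_stars_solution {κ n : ℕ} (G : SimpleGraph (Fin κ × Fin n))
    (h : ∃ T : Set (Node G), IsStarsSolution G T ∧
      TokenDiscovery.Reachable (H G) (fun a : ↥(initialS G) => (a : Node G)) T
        (2 * n * (κ - 1) * κ)) :
    MCCYes G := by
  obtain ⟨T, ⟨-, hleaf, hvertex, hedge⟩, hreach⟩ := h
  obtain ⟨g, hinj, rfl, w, hw⟩ := hreach.exists_walks
  choose v hempty _ using hvertex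
  have hgT (a) : g a ∈ Set.range g := Set.mem_range_self a
  have havoid (i a) : g a ∉ vertexGadgetLeaves G i (v i) := fun ha =>
    (hempty i).subset ⟨ha, hgT a⟩
  have hend := exists_edgeLeaf_of_sum_length_le hinj (fun a => hleaf _ (hgT a)) havoid w hw
  refine mccYes_of_forall_lt v fun i j hij => ?_
  obtain ⟨x, y, hadj, -, hsel⟩ := hedge i j hij
  have hi : v i = x := eq_of_forall_edgeLeaf hinj (hend i ⟨j, hij.ne'⟩) fun a x' y' q hq =>
    eq_of_mem_of_eq_eleaf hsel (hgT a) (hq.trans (edgeLeaf_of_lt hij ..))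
  have hj : v j = y := eq_of_forall_edgeLeaf hinj (hend j ⟨i, hij.ne⟩) fun a y' x' q hq =>
    (eq_of_mem_of_eq_eleaf hsel (hgT a) (hq.trans (edgeLeaf_of_gt hij ..))).symm
  rwa [hi, hj]
end

section
/- For the graph H of the paths construction obtained from a Multicolored Clique instance (G, κ), the modulator to paths number satisfies mp(H) ≤ 5·(κ choose 2) + κ; indeed, the set consisting of all green connector nodes, all gray edge block nodes, and all teal vertex block nodes is a modulator to paths of H. -/
namespace PathsConstruction

/-- Pre-nodes of the paths construction obtained from a Multicolored Clique
instance with `κ` color classes of `n` vertices each.  The vertex `x` of class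
`i` is the pair `(i, x) : Fin κ × Fin n`, and its index is `ι(i, x) = x + 1`. -/
inductive PreNode (κ n : ℕ) : Type
  /-- the teal vertex block node `b_i` -/
  | vblock (i : Fin κ)
  /-- the `p`-th node (for `p < n(κ−1)`) of the path vertex-gadget for `(i, x)` -/
  | vnode (i : Fin κ) (x : Fin n) (p : ℕ)
  /-- the gray edge block node `b_{i,j}` (for `i < j`) -/
  | eblock (i j : Fin κ)
  /-- the `p`-th node (for `p < 2n`) of the path edge-gadget for the edge `(i,x)(j,y)` -/
  | enode (i j : Fin κ) (x y : Fin n) (p : ℕ)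
  /-- green connector node for the pair `{i, j}` (with `i < j`); `fromSecond`
  tells whether it is the connector from color `j` (rather than from color `i`),
  and `isIndex` whether it is the index (rather than the remainder) connector -/
  | conn (i j : Fin κ) (fromSecond : Bool) (isIndex : Bool)

variable {κ n : ℕ}

/-- The index (`isIndex = true`) or remainder (`isIndex = false`) connector
node from color `i` to the pair `{i, j}`. -/
def connFor (i j : Fin κ) (isIndex : Bool) : PreNode κ n :=
  if i < j then PreNode.conn i j false isIndex else PreNode.conn j i true isIndex

variable (G : SimpleGraph (Fin κ × Fin n))

/-- The pre-nodes actually present in the paths construction for the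
Multicolored Clique instance `G`. -/
def Valid : PreNode κ n → Prop
  | PreNode.vblock _ => True
  | PreNode.vnode _ _ p => p < n * (κ - 1)
  | PreNode.eblock i j => i < j
  | PreNode.enode i j x y p => i < j ∧ G.Adj (i, x) (j, y) ∧ p < 2 * n
  | PreNode.conn i j _ _ => i < j

/-- Nodes of the paths construction. -/
abbrev Node := {w : PreNode κ n // Valid G w}

/-- The class corresponding to the `g`-th group (0-based) of a path
vertex-gadget of the vertex-block for `i`: the groups enumerate the classes
different from `i` in increasing order. -/
def classOfGroup (i : Fin κ) (g : ℕ) : ℕ := if g < (i : ℕ) then g else g + 1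

/-- The base adjacency relation of the paths construction (to be symmetrized).
Within the group of a path vertex-gadget (or the half of a path edge-gadget)
corresponding to a vertex of index `ι = x + 1`, the first `ι` nodes go to the
index connector and the remaining `n − ι` nodes go to the remainder
connector. -/
def Rel : PreNode κ n → PreNode κ n → Prop := fun a b =>
  (∃ i x p, a = PreNode.vnode i x p ∧ b = PreNode.vnode i x (p + 1)) ∨
  (∃ i x p, a = PreNode.vnode i x p ∧ b = PreNode.vblock i) ∨
  (∃ (i : Fin κ) (x : Fin n) (p : ℕ) (j : Fin κ), (j : ℕ) = classOfGroup i (p / n) ∧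
      p % n ≤ (x : ℕ) ∧ a = PreNode.vnode i x p ∧ b = connFor i j true) ∨
  (∃ (i : Fin κ) (x : Fin n) (p : ℕ) (j : Fin κ), (j : ℕ) = classOfGroup i (p / n) ∧
      (x : ℕ) < p % n ∧ a = PreNode.vnode i x p ∧ b = connFor i j false) ∨
  (∃ i j x y p, a = PreNode.enode i j x y p ∧ b = PreNode.enode i j x y (p + 1)) ∨
  (∃ i j x y p, a = PreNode.enode i j x y p ∧ b = PreNode.eblock i j) ∨
  (∃ (i j : Fin κ) (x y : Fin n) (p : ℕ), p ≤ (x : ℕ) ∧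
      a = PreNode.enode i j x y p ∧ b = connFor i j true) ∨
  (∃ (i j : Fin κ) (x y : Fin n) (p : ℕ), (x : ℕ) < p ∧ p < n ∧
      a = PreNode.enode i j x y p ∧ b = connFor i j false) ∨
  (∃ (i j : Fin κ) (x y : Fin n) (p : ℕ), n ≤ p ∧ p - n ≤ (y : ℕ) ∧
      a = PreNode.enode i j x y p ∧ b = connFor j i true) ∨
  (∃ (i j : Fin κ) (x y : Fin n) (p : ℕ), n ≤ p ∧ (y : ℕ) < p - n ∧
      a = PreNode.enode i j x y p ∧ b = connFor j i false)

/-- The graph `H` of the paths construction. -/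
def H : SimpleGraph (Node G) := SimpleGraph.fromRel (fun a b => Rel a.1 b.1)

/-- The initial configuration: all nodes of all path vertex-gadgets. -/
def initialS : Set (Node G) := {w | ∃ i x p, w.1 = PreNode.vnode i x p}

/-- The nodes of the path vertex-gadget for the vertex `(i, x)`. -/
def vertexGadgetNodes (i : Fin κ) (x : Fin n) : Set (Node G) :=
  {w | ∃ p, w.1 = PreNode.vnode i x p}

/-- The nodes of the path edge-gadget for the edge `(i,x)(j,y)`. -/
def edgeGadgetNodes (i j : Fin κ) (x y : Fin n) : Set (Node G) :=
  {w | ∃ p, w.1 = PreNode.enode i j x y p}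

/-- The gadget nodes: the nodes of all path vertex-gadgets and path
edge-gadgets (that is, all non-block non-connector nodes). -/
def gadgetNodes : Set (Node G) :=
  {w | (∃ i x p, w.1 = PreNode.vnode i x p) ∨ ∃ i j x y p, w.1 = PreNode.enode i j x y p}

/-- A paths solution: a set `T` of nodes with `|T| = |S|` satisfying
conditions (P1)–(P4). -/
def IsPathsSolution (T : Set (Node G)) : Prop :=
  T.ncard = (initialS G).ncard ∧
  -- (P1): no block or connector node is in `T`
  (∀ w ∈ T, w ∈ gadgetNodes G) ∧
  -- (P2): for each `i`, some node of a path vertex-gadget adjacent to `b_i`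
  -- is not in `T`
  (∀ i : Fin κ, ∃ w : Node G, (∃ x p, w.1 = PreNode.vnode i x p) ∧ w ∉ T) ∧
  -- (P3): for each pair `{i,j}`, some node of a path edge-gadget adjacent to
  -- `b_{i,j}` is in `T`
  (∀ i j : Fin κ, i < j → ∃ w : Node G, (∃ x y p, w.1 = PreNode.enode i j x y p) ∧ w ∈ T) ∧
  -- (P4): a gadget node is in `T` iff every gadget node at distance at most
  -- two from it in the subgraph induced by the gadget nodes is in `T`
  (∀ a : ↥(gadgetNodes G), (a : Node G) ∈ T ↔
      ∀ b : ↥(gadgetNodes G),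
        (∃ pw : (SimpleGraph.induce (gadgetNodes G) (H G)).Walk a b, pw.length ≤ 2) →
        (b : Node G) ∈ T)

/-- The Multicolored Clique instance is a yes-instance: there is a clique of
`G` with exactly one vertex from each color class. -/
def MCCYes : Prop :=
  ∃ f : Fin κ → Fin n, ∀ i j : Fin κ, i ≠ j → G.Adj (i, f i) (j, f j)

end PathsConstruction

/-- Every connected component of `K` is a path. -/
def ComponentsArePaths {W : Type*} (K : SimpleGraph W) : Prop :=
  ∀ C : K.ConnectedComponent, ∃ (N : ℕ) (g : Fin N ≃ C.supp),
    ∀ a b : Fin N, K.Adj (g a : W) (g b : W) ↔ ((a : ℕ) + 1 = (b : ℕ) ∨ (b : ℕ) + 1 = (a : ℕ))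

/-- `X` is a modulator to paths of `K`: every connected component of `K − X`
is a path. -/
def IsPathsModulator {W : Type*} (K : SimpleGraph W) (X : Set W) : Prop :=
  ComponentsArePaths (SimpleGraph.induce Xᶜ K)

/-- The modulator to paths number: the minimum size of a modulator to paths. -/
noncomputable def pathsModulatorNumber {W : Type*} (K : SimpleGraph W) : ℕ :=
  sInf {k | ∃ X : Set W, IsPathsModulator K X ∧ X.ncard = k}

/-! Deleting the block and connector nodes leaves only the gadgets. Each gadget induces a path,
and no edge of `H` joins two different gadgets, so the gadgets are the connected components. There
are five deleted nodes for each pair of classes (one block node and four connectors) and one for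
each class. -/

section PathsModulator

open SimpleGraph

variable {W : Type*} {K : SimpleGraph W}

theorem connectedComponentMk_supp_eq_range {V : Type*} {L : SimpleGraph V} (hL : L.Preconnected)
    (f : L →g K) (hclosed : ∀ a w, K.Adj (f a) w → w ∈ Set.range f) (a : V) :
    (K.connectedComponentMk (f a)).supp = Set.range f := by
  refine Set.Subset.antisymm (fun w hw => ?_) ?_
  · have hreach : K.Reachable (f a) w := (ConnectedComponent.exact hw).symm
    refine hreach.mem_subgraphVerts (H := (⊤ : K.Subgraph).induce (Set.range f)) ?_ ⟨a, rfl⟩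
    rintro _ ⟨b, rfl⟩ v hbv
    exact ⟨⟨b, rfl⟩, hclosed b v hbv, hbv⟩
  · rintro _ ⟨b, rfl⟩
    exact ConnectedComponent.sound ((hL b a).map f)

theorem componentsArePaths_of_pathGraph_embeddings {ι : Type*} {N : ι → ℕ}
    (f : ∀ c, pathGraph (N c) ↪g K) (hcover : ∀ w, ∃ c a, f c a = w)
    (hsep : ∀ c d a b, K.Adj (f c a) (f d b) → c = d) :
    ComponentsArePaths K := by
  intro C
  obtain ⟨w, rfl⟩ := C.exists_rep
  obtain ⟨c, a, rfl⟩ := hcover w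
  have hclosed : ∀ b v, K.Adj (f c b) v → v ∈ Set.range (f c) := by
    intro b v hbv
    obtain ⟨d, b', rfl⟩ := hcover v
    obtain rfl := hsep c d b b' hbv
    exact ⟨b', rfl⟩
  have hsupp : (K.connectedComponentMk (f c a)).supp = Set.range (f c) :=
    connectedComponentMk_supp_eq_range (pathGraph_preconnected (N c)) (f c).toHom hclosed a
  exact ⟨N c, (Equiv.ofInjective (f c) (f c).injective).trans (Equiv.setCongr hsupp.symm),
    fun b b' => (f c).map_adj_iff.trans pathGraph_adj⟩

theorem pathsModulatorNumber_le_ncard {X : Set W} (hX : IsPathsModulator K X) :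
    pathsModulatorNumber K ≤ X.ncard :=
  Nat.sInf_le ⟨X, hX, rfl⟩

end PathsModulator

theorem card_subtype_fst_lt_snd (α : Type*) [Fintype α] [LinearOrder α] :
    Fintype.card {e : α × α // e.1 < e.2} = (Fintype.card α).choose 2 := by
  rw [Fintype.card_subtype, ← Finset.univ_product_univ, Finset.card_product_filter_lt,
    Finset.card_univ]

namespace PathsConstruction

open SimpleGraph

variable {κ n : ℕ} (G : SimpleGraph (Fin κ × Fin n))

/-- A gadget of the construction: the vertex-gadget of the vertex `(i, x)`, or the edge-gadget of
the edge `(i, x)(j, y)`, each edge being listed once, from its smaller class. -/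
inductive Gadget
  | vertex (i : Fin κ) (x : Fin n)
  | edge (i j : Fin κ) (x y : Fin n) (hij : i < j) (hadj : G.Adj (i, x) (j, y))

namespace Gadget

variable {G}

/-- The number of nodes of a gadget. -/
def length : Gadget G → ℕ
  | vertex _ _ => n * (κ - 1)
  | edge .. => 2 * n

/-- The pre-node at position `p` of a gadget, present in `H` only if `p` is less than the length
of the gadget. -/
def preNode : Gadget G → ℕ → PreNode κ n
  | vertex i x, p => .vnode i x p
  | edge i j x y _ _, p => .enode i j x y p

theorem valid_preNode (c : Gadget G) {p : ℕ} (hp : p < c.length) : Valid G (c.preNode p) := by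
  cases c with
  | vertex i x => exact hp
  | edge i j x y hij hadj => exact ⟨hij, hadj, hp⟩

/-- The node of `H` at a given position of a gadget. -/
def node (c : Gadget G) (p : Fin c.length) : Node G :=
  ⟨c.preNode p, c.valid_preNode p.isLt⟩

theorem preNode_injective (c : Gadget G) : Function.Injective c.preNode := by
  intro p q h
  cases c <;> simpa [preNode] using h

theorem node_injective (c : Gadget G) : Function.Injective c.node := fun _ _ h =>
  Fin.ext (c.preNode_injective (congrArg Subtype.val h))

theorem preNode_ne_connFor (c : Gadget G) (p : ℕ) (i j : Fin κ) (isIndex : Bool) :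
    c.preNode p ≠ connFor i j isIndex := by
  unfold connFor
  cases c <;> split <;> exact nofun

theorem rel_preNode_iff (c d : Gadget G) (p q : ℕ) :
    Rel (c.preNode p) (d.preNode q) ↔ c = d ∧ p + 1 = q := by
  simp only [Rel, preNode_ne_connFor, and_false, exists_false, or_false, false_or]
  cases c <;> cases d <;> simp only [preNode, reduceCtorEq, false_and, and_false, exists_false,
    or_false, false_or, PreNode.vnode.injEq, PreNode.enode.injEq, vertex.injEq, edge.injEq] <;>
    grind

theorem adj_node_iff (c d : Gadget G) (p : Fin c.length) (q : Fin d.length) :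
    (H G).Adj (c.node p) (d.node q) ↔
      c = d ∧ ((p : ℕ) + 1 = q ∨ (q : ℕ) + 1 = p) := by
  simp only [H, fromRel_adj, node, rel_preNode_iff, ne_eq, Subtype.mk.injEq]
  constructor
  · rintro ⟨-, ⟨rfl, h⟩ | ⟨rfl, h⟩⟩
    exacts [⟨rfl, .inl h⟩, ⟨rfl, .inr h⟩]
  · rintro ⟨rfl, h⟩
    refine ⟨fun heq => ?_, by simpa using h⟩
    have := c.preNode_injective heq
    omega

end Gadget

/-- The set of all green connector nodes, gray edge block nodes and teal vertex block nodes. -/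
def connectorOrBlockNodes : Set (Node G) :=
  {w | (∃ i j s k, w.1 = PreNode.conn i j s k) ∨
    (∃ i j, w.1 = PreNode.eblock i j) ∨ (∃ i, w.1 = PreNode.vblock i)}

variable {G}

theorem Gadget.node_notMem_connectorOrBlockNodes (c : Gadget G) (p : Fin c.length) :
    c.node p ∉ connectorOrBlockNodes G := by
  cases c <;> simp [connectorOrBlockNodes, node, preNode]

theorem exists_gadget_node_eq {w : Node G} (hw : w ∉ connectorOrBlockNodes G) :
    ∃ (c : Gadget G) (p : Fin c.length), c.node p = w := by
  obtain ⟨w, hvalid⟩ := w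
  cases w with
  | vnode i x p => exact ⟨.vertex i x, ⟨p, hvalid⟩, rfl⟩
  | enode i j x y p => exact ⟨.edge i j x y hvalid.1 hvalid.2.1, ⟨p, hvalid.2.2⟩, rfl⟩
  | conn i j s k => exact absurd (.inl ⟨i, j, s, k, rfl⟩) hw
  | eblock i j => exact absurd (.inr (.inl ⟨i, j, rfl⟩)) hw
  | vblock i => exact absurd (.inr (.inr ⟨i, rfl⟩)) hw

/-- The nodes of a gadget, in order, as an induced path of `H` minus the connector and block
nodes. -/
def Gadget.pathEmbedding (c : Gadget G) :
    pathGraph c.length ↪g (H G).induce (connectorOrBlockNodes G)ᶜ where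
  toFun p := ⟨c.node p, c.node_notMem_connectorOrBlockNodes p⟩
  inj' _ _ h := c.node_injective (congrArg Subtype.val h)
  map_rel_iff' {p q} :=
    (c.adj_node_iff c p q).trans ((and_iff_right rfl).trans pathGraph_adj.symm)

variable (G)

theorem isPathsModulator_connectorOrBlockNodes :
    IsPathsModulator (H G) (connectorOrBlockNodes G) := by
  refine componentsArePaths_of_pathGraph_embeddings (Gadget.pathEmbedding (G := G)) ?_ ?_
  · rintro ⟨w, hw⟩
    obtain ⟨c, p, rfl⟩ := exists_gadget_node_eq hw
    exact ⟨c, p, rfl⟩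
  · exact fun c d p q hadj => ((c.adj_node_iff d p q).mp hadj).1

/-- Enumeration of the connector and block nodes by classes and pairs of classes: a pair `i < j`
contributes its block node (at `none`) and its four connectors. -/
def connectorOrBlockNode :
    {e : Fin κ × Fin κ // e.1 < e.2} × Option (Bool × Bool) ⊕ Fin κ → Node G
  | .inl (e, none) => ⟨.eblock e.1.1 e.1.2, e.2⟩
  | .inl (e, some (s, k)) => ⟨.conn e.1.1 e.1.2 s k, e.2⟩
  | .inr i => ⟨.vblock i, trivial⟩

theorem connectorOrBlockNode_injective : Function.Injective (connectorOrBlockNode G) := by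
  rintro (⟨⟨⟨i, j⟩, _⟩, _ | ⟨s, k⟩⟩ | i) (⟨⟨⟨i', j'⟩, _⟩, _ | ⟨s', k'⟩⟩ | i') h <;>
    cases congrArg Subtype.val h <;> rfl

theorem range_connectorOrBlockNode :
    Set.range (connectorOrBlockNode G) = connectorOrBlockNodes G := by
  ext w
  constructor
  · rintro ⟨⟨e, _ | ⟨s, k⟩⟩ | i, rfl⟩
    exacts [.inr (.inl ⟨_, _, rfl⟩), .inl ⟨_, _, _, _, rfl⟩, .inr (.inr ⟨_, rfl⟩)]
  · obtain ⟨w, hvalid⟩ := w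
    rintro (⟨i, j, s, k, rfl⟩ | ⟨i, j, rfl⟩ | ⟨i, rfl⟩)
    exacts [⟨.inl (⟨(i, j), hvalid⟩, some (s, k)), rfl⟩, ⟨.inl (⟨(i, j), hvalid⟩, none), rfl⟩,
      ⟨.inr i, rfl⟩]

theorem ncard_connectorOrBlockNodes :
    (connectorOrBlockNodes G).ncard = 5 * κ.choose 2 + κ := by
  rw [← range_connectorOrBlockNode, Set.ncard_range_of_injective (connectorOrBlockNode_injective G),
    Nat.card_eq_fintype_card]
  simp only [Fintype.card_sum, Fintype.card_prod, card_subtype_fst_lt_snd, Fintype.card_option,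
    Fintype.card_bool, Fintype.card_fin]
  omega

end PathsConstruction

open PathsConstruction in
/-- For the graph `H` of the paths construction, the set of all green
connector nodes, gray edge block nodes and teal vertex block nodes is a
modulator to paths; consequently `mp(H) ≤ 5·(κ choose 2) + κ`. -/
theorem paths_modulator_number_le {κ n : ℕ} (G : SimpleGraph (Fin κ × Fin n)) :
    IsPathsModulator (H G)
      {w : Node G | (∃ i j s k, w.1 = PreNode.conn i j s k) ∨
        (∃ i j, w.1 = PreNode.eblock i j) ∨ (∃ i, w.1 = PreNode.vblock i)} ∧
    pathsModulatorNumber (H G) ≤ 5 * Nat.choose κ 2 + κ := by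
  have hmod := isPathsModulator_connectorOrBlockNodes G
  exact ⟨hmod, (pathsModulatorNumber_le_ncard hmod).trans_eq (ncard_connectorOrBlockNodes G)⟩
end
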